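/- arXiv:1409.8444 — 6 statements merged into one kernel-verified Lean document; each statement's English description precedes it below -/
import Mathlib

section
/- Suppose the step-size parameter γ > 0 satisfies (1 + γL)² + (5γl)/2 − 3/2 < 0 and let (yᵗ, zᵗ, xᵗ) be generated by the DR splitting method. Then: (i) the sequence t ↦ D_γ(yᵗ, zᵗ, xᵗ) is nonincreasing for t ≥ 1; (ii) if the sequence (yᵗ, zᵗ, xᵗ) has a cluster point, then ‖yᵗ⁺¹ − yᵗ‖ → 0, ‖xᵗ⁺¹ − xᵗ‖ → 0 and ‖zᵗ⁺¹ − yᵗ⁺¹‖ → 0 as t → ∞; (iii) every cluster point (y*, z*, x*) of the sequence satisfies y* = z*, and along any subsequence (y^{t_j}, z^{t_j}, x^{t_j}) converging to (y*, z*, x*) one has g(z^{t_j}) → g(z*). -/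
open Filter Topology

open scoped NNReal

/-!
At a proximal step `x = y⁺ + γ ∇f(y⁺)`, and the merit function has the form
`D_γ(y, z, x) = f(y) + g(z) + (‖x - y‖² - ‖x - z‖²) / (2γ)`. Updating `y`, `z` and `x` one at a
time, weak convexity of `f` makes the `y`-update gain `(1 - γl) / (2γ) ‖y⁺ - y‖²`, while the other
two updates lose at most `‖y⁺ - z‖² / γ`. Since `z = y⁺ + γ (∇f(y⁺) - ∇f(y))`, this loss is at most
`γL² ‖y⁺ - y‖²`, so `D_γ` decreases as soon as `2(γL)² + γl < 1`. A cluster point bounds the merit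
values from below by lower semicontinuity, so the steps vanish. Finally, `zᵗ` minimizes
`g + ‖(yᵗ + zᵗ - xᵗ) - ·‖² / (2γ)`, and comparing with the limit point gives the convergence of the
values of `g`.

The condition `(1 + γL)² + 5γl/2 - 3/2 < 0` is the stronger one: twice its left-hand side is
`2(γL)² + γl - 1 + 4γ(L + l)`, and `-L ≤ l` unless the space is trivial.
-/

section Topological

variable {X β : Type*} [TopologicalSpace X] [LinearOrder β]

lemma le_of_mapClusterPt_of_antitone {h : X → β} {u : ℕ → X} {p : X}
    (hh : LowerSemicontinuousAt h p) (hu : Antitone (h ∘ u)) (hp : MapClusterPt p atTop u) (t : ℕ) :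
    h p ≤ h (u t) := by
  by_contra! hlt
  obtain ⟨s, hts, hs⟩ := frequently_atTop.mp (hp.frequently (hh _ hlt)) t
  exact (hu hts).not_gt hs

lemma tendsto_of_lowerSemicontinuousAt_of_le [TopologicalSpace β] [OrderTopology β] {ι : Type*}
    {F : Filter ι} {h : X → β} {u : ι → X} {b : ι → β} {p : X} (hh : LowerSemicontinuousAt h p)
    (hu : Tendsto u F (𝓝 p)) (hle : ∀ᶠ j in F, h (u j) ≤ b j) (hb : Tendsto b F (𝓝 (h p))) :
    Tendsto (fun j => h (u j)) F (𝓝 (h p)) := by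
  refine tendsto_order.mpr ⟨fun a ha => hu.eventually (hh a ha), fun a ha => ?_⟩
  filter_upwards [hle, hb.eventually_lt_const ha] with j hj hja using hj.trans_lt hja

lemma mapClusterPt_comp_add_iff_nat {u : ℕ → X} {p : X} (k : ℕ) :
    MapClusterPt p atTop (fun t => u (t + k)) ↔ MapClusterPt p atTop u := by
  conv_rhs => rw [← map_add_atTop_eq_nat k]
  exact mapClusterPt_comp

lemma eq_of_mapClusterPt_of_tendsto_sub_zero {G ι : Type*} [AddGroup G] [TopologicalSpace G]
    [IsTopologicalAddGroup G] [T2Space G] {F : Filter ι} {u v : ι → G} {a b : G}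
    (h : MapClusterPt (a, b) F fun t => (u t, v t)) (hsub : Tendsto (fun t => v t - u t) F (𝓝 0)) :
    a = b := by
  have hcl : MapClusterPt (b - a) F fun t => v t - u t :=
    h.continuousAt_comp (f := fun q : G × G => q.2 - q.1) (by fun_prop)
  exact (sub_eq_zero.mp (eq_of_nhds_neBot (hcl.clusterPt.mono hsub))).symm

end Topological

lemma tendsto_zero_of_add_le {u d : ℕ → ℝ} (hd : ∀ t, 0 ≤ d t) (hu : ∀ t, u (t + 1) + d t ≤ u t)
    (hb : BddBelow (Set.range u)) : Tendsto d atTop (𝓝 0) := by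
  have hanti : Antitone u := antitone_nat_of_succ_le fun t => by linarith [hd t, hu t]
  have hlim := tendsto_atTop_ciInf hanti hb
  have hdiff : Tendsto (fun t => u t - u (t + 1)) atTop (𝓝 0) := by
    simpa using hlim.sub (hlim.comp (tendsto_add_atTop_nat 1))
  exact squeeze_zero hd (fun t => by linarith [hu t]) hdiff

section InnerProductSpace

variable {E : Type*} [NormedAddCommGroup E] [InnerProductSpace ℝ E]

section Gradient

variable [CompleteSpace E] {f : E → ℝ} {f' : E → E} {v a b p : E} {s : Set E} {K : ℝ≥0} {l γ : ℝ}

lemma hasGradientAt_add_const_mul_norm_sub_sq (hf : HasGradientAt f v a) (c : ℝ) (p : E) :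
    HasGradientAt (fun w => f w + c * ‖w - p‖ ^ 2) (v + (2 * c) • (a - p)) a := by
  have hsq : HasFDerivAt (fun w => c * ‖w - p‖ ^ 2) _ a :=
    ((hasFDerivAt_id a).sub_const p).norm_sq.const_mul c
  rw [hasGradientAt_iff_hasFDerivAt]
  refine (hf.hasFDerivAt.add hsq).congr_fderiv ?_
  ext d
  simp [mul_left_comm, mul_assoc]

lemma eq_zero_of_isLocalMin_of_hasGradientAt (hmin : IsLocalMin f a) (hf : HasGradientAt f v a) :
    v = 0 := by
  simpa using hmin.hasFDerivAt_eq_zero hf.hasFDerivAt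

lemma add_inner_le_of_convexOn (hconv : ConvexOn ℝ s f) (hf : HasGradientAt f v a) (ha : a ∈ s)
    (hb : b ∈ s) : f a + inner ℝ v (b - a) ≤ f b := by
  have hderiv : HasDerivAt (f ∘ AffineMap.lineMap a b) (inner ℝ v (b - a)) (0 : ℝ) := by
    have hf0 : HasFDerivAt f (InnerProductSpace.toDual ℝ E v) (AffineMap.lineMap a b (0 : ℝ)) := by
      simpa using hf.hasFDerivAt
    simpa using hf0.comp_hasDerivAt (0 : ℝ) AffineMap.hasDerivAt_lineMap
  have hslope := (hconv.comp_affineMap (AffineMap.lineMap a b)).le_slope_of_hasDerivAt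
    (by simpa using ha) (by simpa using hb) one_pos hderiv
  simp only [slope_def_field, Function.comp_apply, AffineMap.lineMap_apply_one,
    AffineMap.lineMap_apply_zero, sub_zero, div_one] at hslope
  linarith

lemma add_inner_sub_norm_sq_le_of_convexOn
    (hconv : ConvexOn ℝ s fun w => f w + l / 2 * ‖w‖ ^ 2) (hf : HasGradientAt f v a) (ha : a ∈ s)
    (hb : b ∈ s) : f a + inner ℝ v (b - a) - l / 2 * ‖b - a‖ ^ 2 ≤ f b := by
  have hgrad : HasGradientAt (fun w => f w + l / 2 * ‖w‖ ^ 2) (v + l • a) a := by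
    simpa [mul_div_cancel₀] using hasGradientAt_add_const_mul_norm_sub_sq hf (l / 2) 0
  have hle := add_inner_le_of_convexOn hconv hgrad ha hb
  have hnorm : ‖b‖ ^ 2 = ‖a‖ ^ 2 + 2 * inner ℝ a (b - a) + ‖b - a‖ ^ 2 := by
    rw [← norm_add_sq_real, add_sub_cancel]
  rw [inner_add_left, real_inner_smul_left, hnorm] at hle
  linarith

lemma eq_add_smul_gradient_of_prox_min (hγ : γ ≠ 0) (hf : HasGradientAt f v a)
    (hmin : ∀ w, f a + 1 / (2 * γ) * ‖a - p‖ ^ 2 ≤ f w + 1 / (2 * γ) * ‖w - p‖ ^ 2) :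
    p = a + γ • v := by
  have hzero := eq_zero_of_isLocalMin_of_hasGradientAt (.of_forall hmin)
    (hasGradientAt_add_const_mul_norm_sub_sq hf (1 / (2 * γ)) p)
  have hγv : γ • (v + (2 * (1 / (2 * γ))) • (a - p)) = γ • v + (a - p) := by
    rw [smul_add, smul_smul, show γ * (2 * (1 / (2 * γ))) = 1 by field_simp, one_smul]
  rw [hzero, smul_zero] at hγv
  rw [← sub_eq_zero, ← neg_eq_zero, hγv]
  abel

lemma neg_le_of_lipschitzWith_of_convexOn [Nontrivial E] (hgrad : ∀ w, HasGradientAt f (f' w) w)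
    (hlip : LipschitzWith K f')
    (hconv : ConvexOn ℝ Set.univ fun w => f w + l / 2 * ‖w‖ ^ 2) : -K ≤ l := by
  obtain ⟨a, b, hab⟩ := exists_pair_ne E
  have hpos : 0 < ‖b - a‖ ^ 2 := by
    have := norm_pos_iff.mpr (sub_ne_zero.mpr hab.symm)
    positivity
  have hle : -l * ‖b - a‖ ^ 2 ≤ K * ‖b - a‖ ^ 2 := calc
    -l * ‖b - a‖ ^ 2 ≤ inner ℝ (f' b - f' a) (b - a) := by
      have hab := add_inner_sub_norm_sq_le_of_convexOn hconv (hgrad a) (Set.mem_univ a)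
        (Set.mem_univ b)
      have hba := add_inner_sub_norm_sq_le_of_convexOn hconv (hgrad b) (Set.mem_univ b)
        (Set.mem_univ a)
      rw [← neg_sub b a, inner_neg_right, norm_neg] at hba
      rw [inner_sub_left]
      linarith
    _ ≤ ‖f' b - f' a‖ * ‖b - a‖ := real_inner_le_norm _ _
    _ ≤ K * ‖b - a‖ * ‖b - a‖ := by gcongr; exact hlip.norm_sub_le b a
    _ = K * ‖b - a‖ ^ 2 := by ring
  linarith [le_of_mul_le_mul_right hle hpos]

lemma exists_moduli_of_step_lt (hγ : 0 ≤ γ) (hgrad : ∀ w, HasGradientAt f (f' w) w)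
    (hlip : LipschitzWith K f') (hconv : ConvexOn ℝ Set.univ fun w => f w + l / 2 * ‖w‖ ^ 2)
    (hstep : (1 + γ * K) ^ 2 + 5 * γ * l / 2 - 3 / 2 < 0) :
    ∃ (K' : ℝ≥0) (l' : ℝ), LipschitzWith K' f' ∧
      ConvexOn ℝ Set.univ (fun w => f w + l' / 2 * ‖w‖ ^ 2) ∧ 2 * (γ * K') ^ 2 + γ * l' < 1 := by
  obtain hE | hE := subsingleton_or_nontrivial E
  · refine ⟨0, 0, fun a b => ?_, ⟨convex_univ, fun a _ b _ α β _ _ hαβ => ?_⟩, by simp⟩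
    · simp [Subsingleton.elim a b]
    · simp [Subsingleton.elim _ (0 : E), ← add_mul, hαβ]
  · have hKl : 0 ≤ γ * (K + l) :=
      mul_nonneg hγ (by linarith [neg_le_of_lipschitzWith_of_convexOn hgrad hlip hconv])
    have hcond : 2 * (γ * K) ^ 2 + γ * l
        = 1 + 2 * ((1 + γ * K) ^ 2 + 5 * γ * l / 2 - 3 / 2) - 4 * (γ * (K + l)) := by ring
    exact ⟨K, l, hlip, hconv, by linarith [hcond]⟩

end Gradient

section Merit

variable {f : E → ℝ} {g : E → EReal} {l γ : ℝ}

/-- The part of the Douglas–Rachford merit function `D_γ` that does not involve the values of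
`f` and `g`; it couples the variables `y`, `z`, `x`. -/
noncomputable def drCoupling (γ : ℝ) (y z x : E) : ℝ :=
  -(1 / (2 * γ)) * ‖y - z‖ ^ 2 + 1 / γ * inner ℝ (x - y) (z - y)

/-- The Douglas–Rachford merit function `D_γ`. It takes values in `EReal`, as `g` does. -/
noncomputable def drMerit (f : E → ℝ) (g : E → EReal) (γ : ℝ) (y z x : E) : EReal :=
  f y + g z + drCoupling γ y z x

lemma drCoupling_eq_norm_sq_sub (γ : ℝ) (y z x : E) :
    drCoupling γ y z x = (‖x - y‖ ^ 2 - ‖x - z‖ ^ 2) / (2 * γ) := by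
  have hxz : ‖x - z‖ ^ 2 = ‖x - y‖ ^ 2 - 2 * inner ℝ (x - y) (z - y) + ‖y - z‖ ^ 2 := by
    rw [← norm_sub_rev z y, ← norm_sub_sq_real, sub_sub_sub_cancel_right]
  rw [drCoupling, hxz]
  ring

lemma drCoupling_eq_reflected_norm_sq (γ : ℝ) (y z x : E) :
    drCoupling γ y z x =
      1 / (2 * γ) * ‖(2 : ℝ) • y - x - z‖ ^ 2 - ‖x - y‖ ^ 2 / (2 * γ) - ‖y - z‖ ^ 2 / γ := by
  have hrefl : (2 : ℝ) • y - x - z = (y - z) - (x - y) := by rw [two_smul]; abel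
  rw [drCoupling, hrefl, norm_sub_sq_real (y - z), ← neg_sub y z, inner_neg_right,
    real_inner_comm]
  ring

lemma drCoupling_add_sub (γ : ℝ) (y z x : E) :
    drCoupling γ y z (x + (z - y)) = drCoupling γ y z x + ‖y - z‖ ^ 2 / γ := by
  rw [drCoupling, drCoupling, add_sub_right_comm, inner_add_left, real_inner_self_eq_norm_sq,
    norm_sub_rev z y]
  ring

lemma add_drCoupling_le_of_reflected_prox {y z z' x : E} {α α' : ℝ}
    (hmin : α' + 1 / (2 * γ) * ‖(2 : ℝ) • y - x - z'‖ ^ 2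
      ≤ α + 1 / (2 * γ) * ‖(2 : ℝ) • y - x - z‖ ^ 2) :
    α' + drCoupling γ y z' x + ‖y - z'‖ ^ 2 / γ ≤ α + drCoupling γ y z x + ‖y - z‖ ^ 2 / γ := by
  rw [drCoupling_eq_reflected_norm_sq, drCoupling_eq_reflected_norm_sq]
  linarith

lemma add_drCoupling_le_of_convexOn [CompleteSpace E] {v y y' : E} (hγ : γ ≠ 0)
    (hconv : ConvexOn ℝ Set.univ fun w => f w + l / 2 * ‖w‖ ^ 2) (hf : HasGradientAt f v y')
    (z : E) :
    f y' + drCoupling γ y' z (y' + γ • v) + (1 - γ * l) / (2 * γ) * ‖y' - y‖ ^ 2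
      ≤ f y + drCoupling γ y z (y' + γ • v) := by
  have hle := add_inner_sub_norm_sq_le_of_convexOn hconv hf (Set.mem_univ y') (Set.mem_univ y)
  have hnorm : ‖y' + γ • v - y‖ ^ 2
      = ‖y' + γ • v - y'‖ ^ 2 - 2 * γ * inner ℝ v (y - y') + ‖y' - y‖ ^ 2 := by
    rw [norm_sub_rev y' y, mul_assoc, ← real_inner_smul_left, add_sub_cancel_left,
      ← norm_sub_sq_real]
    congr 2
    abel
  rw [norm_sub_rev y y'] at hle
  rw [drCoupling_eq_norm_sq_sub, drCoupling_eq_norm_sq_sub, hnorm]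
  refine le_of_sub_nonneg ((sub_nonneg.mpr hle).trans_eq ?_)
  field_simp
  ring

lemma drMerit_ne_bot {z : E} (hz : g z ≠ ⊥) (y x : E) : drMerit f g γ y z x ≠ ⊥ := by
  simp [drMerit, hz]

lemma drMerit_ne_top {z : E} (hz : g z ≠ ⊤) (y x : E) : drMerit f g γ y z x ≠ ⊤ :=
  EReal.add_ne_top (EReal.add_ne_top (EReal.coe_ne_top _) hz) (EReal.coe_ne_top _)

lemma lowerSemicontinuous_drMerit (hf : Continuous f) (hg : LowerSemicontinuous g) :
    LowerSemicontinuous fun q : E × E × E => drMerit f g γ q.1 q.2.1 q.2.2 := by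
  have hf' : Continuous fun q : E × E × E => (f q.1 : EReal) :=
    EReal.continuous_coe_iff.mpr (hf.comp continuous_fst)
  have hg' : LowerSemicontinuous fun q : E × E × E => g q.2.1 := hg.comp (by fun_prop)
  have hc : Continuous fun q : E × E × E => (drCoupling γ q.1 q.2.1 q.2.2 : EReal) :=
    EReal.continuous_coe_iff.mpr (by unfold drCoupling; fun_prop)
  exact (hf'.lowerSemicontinuous.add' hg' fun q => EReal.continuousAt_add (by simp) (by simp)).add'
    hc.lowerSemicontinuous fun q => EReal.continuousAt_add (by simp) (by simp)

end Merit

/-- `y`, `z`, `x` are generated by the Douglas–Rachford splitting method for `f + g` with step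
size `γ`. Only `x 0` is an initial value: the method does not constrain `y 0` and `z 0`. -/
structure IsDouglasRachfordSeq (f : E → ℝ) (g : E → EReal) (γ : ℝ) (x y z : ℕ → E) : Prop where
  y_min : ∀ t w, f (y (t + 1)) + 1 / (2 * γ) * ‖y (t + 1) - x t‖ ^ 2
    ≤ f w + 1 / (2 * γ) * ‖w - x t‖ ^ 2
  z_min : ∀ t w, g (z (t + 1))
      + ((1 / (2 * γ) * ‖(2 : ℝ) • y (t + 1) - x t - z (t + 1)‖ ^ 2 : ℝ) : EReal)
    ≤ g w + ((1 / (2 * γ) * ‖(2 : ℝ) • y (t + 1) - x t - w‖ ^ 2 : ℝ) : EReal)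
  x_succ : ∀ t, x (t + 1) = x t + (z (t + 1) - y (t + 1))

namespace IsDouglasRachfordSeq

variable {f : E → ℝ} {f' : E → E} {g : E → EReal} {K : ℝ≥0} {l γ : ℝ} {x y z : ℕ → E}

lemma apply_z_ne_top (h : IsDouglasRachfordSeq f g γ x y z) (hg : ∃ w, g w ≠ ⊤) (t : ℕ) :
    g (z (t + 1)) ≠ ⊤ := by
  obtain ⟨w, hw⟩ := hg
  intro htop
  have hle := h.z_min t w
  rw [htop, EReal.top_add_coe, top_le_iff] at hle
  exact EReal.add_ne_top hw (EReal.coe_ne_top _) hle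

lemma tendsto_apply_z {ι : Type*} {F : Filter ι} {φ : ι → ℕ} {xs ys zs : E}
    (h : IsDouglasRachfordSeq f g γ x y z) (hg : LowerSemicontinuousAt g zs)
    (hφ : Tendsto φ F atTop) (hx : Tendsto (fun j => x (φ j)) F (𝓝 xs))
    (hy : Tendsto (fun j => y (φ j)) F (𝓝 ys)) (hz : Tendsto (fun j => z (φ j)) F (𝓝 zs)) :
    Tendsto (fun j => g (z (φ j))) F (𝓝 (g zs)) := by
  let r : E → ι → ℝ := fun w j => 1 / (2 * γ) * ‖y (φ j) + z (φ j) - x (φ j) - w‖ ^ 2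
  have hle : ∀ᶠ j in F, g (z (φ j)) ≤ g zs + ((r zs j - r (z (φ j)) j : ℝ) : EReal) := by
    filter_upwards [hφ.eventually_ge_atTop 1] with j hj
    obtain ⟨t, ht⟩ := Nat.exists_eq_add_of_le' hj
    have hcenter : (2 : ℝ) • y (t + 1) - x t = y (t + 1) + z (t + 1) - x (t + 1) := by
      rw [h.x_succ, two_smul]; abel
    have hmin := h.z_min t zs
    rw [hcenter, ← ht] at hmin
    rw [EReal.coe_sub, add_sub_assoc', EReal.le_sub_iff_add_le (by simp) (by simp)]
    exact hmin
  have hr : Tendsto (fun j => r zs j - r (z (φ j)) j) F (𝓝 0) := by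
    have hcenter := (hy.add hz).sub hx
    simpa [r] using (((hcenter.sub_const zs).norm.pow 2).const_mul (1 / (2 * γ))).sub
      (((hcenter.sub hz).norm.pow 2).const_mul (1 / (2 * γ)))
  refine tendsto_of_lowerSemicontinuousAt_of_le hg hz hle ?_
  have hadd : ContinuousAt (fun q : EReal × EReal => q.1 + q.2) (g zs, ((0 : ℝ) : EReal)) :=
    EReal.continuousAt_add (by simp) (by simp)
  simpa [Function.comp_def] using hadd.tendsto.comp
    (tendsto_const_nhds.prodMk_nhds ((continuous_coe_real_ereal.tendsto 0).comp hr))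

variable [CompleteSpace E]

section Iterates

variable (h : IsDouglasRachfordSeq f g γ x y z) (hγ : 0 < γ)
  (hgrad : ∀ w, HasGradientAt f (f' w) w)

include h hγ hgrad

lemma x_eq_add_smul (t : ℕ) : x t = y (t + 1) + γ • f' (y (t + 1)) :=
  eq_add_smul_gradient_of_prox_min hγ.ne' (hgrad _) (h.y_min t)

lemma x_succ_sub (t : ℕ) : x (t + 1) - x t
    = (y (t + 2) - y (t + 1)) + γ • (f' (y (t + 2)) - f' (y (t + 1))) := by
  rw [h.x_eq_add_smul hγ hgrad (t + 1), h.x_eq_add_smul hγ hgrad t, smul_sub]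
  abel

lemma norm_y_sub_z_le (hlip : LipschitzWith K f') (t : ℕ) :
    ‖y (t + 2) - z (t + 1)‖ ≤ γ * K * ‖y (t + 2) - y (t + 1)‖ := by
  have hz : z (t + 1) = y (t + 2) + γ • (f' (y (t + 2)) - f' (y (t + 1))) := calc
    z (t + 1) = y (t + 1) + (x (t + 1) - x t) := by rw [h.x_succ]; abel
    _ = _ := by rw [h.x_succ_sub hγ hgrad]; abel
  rw [hz, sub_add_cancel_left, norm_neg, norm_smul, Real.norm_of_nonneg hγ.le, mul_assoc]
  gcongr
  exact hlip.norm_sub_le _ _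

lemma norm_x_succ_sub_le (hlip : LipschitzWith K f') (t : ℕ) :
    ‖x (t + 1) - x t‖ ≤ (1 + γ * K) * ‖y (t + 2) - y (t + 1)‖ := calc
  ‖x (t + 1) - x t‖ ≤ ‖y (t + 2) - y (t + 1)‖ + γ * ‖f' (y (t + 2)) - f' (y (t + 1))‖ := by
    rw [h.x_succ_sub hγ hgrad]
    exact (norm_add_le _ _).trans_eq (by rw [norm_smul, Real.norm_of_nonneg hγ.le])
  _ ≤ ‖y (t + 2) - y (t + 1)‖ + γ * (K * ‖y (t + 2) - y (t + 1)‖) := by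
    gcongr
    exact hlip.norm_sub_le _ _
  _ = (1 + γ * K) * ‖y (t + 2) - y (t + 1)‖ := by ring

lemma drMerit_succ_add_le (hlip : LipschitzWith K f')
    (hconv : ConvexOn ℝ Set.univ fun w => f w + l / 2 * ‖w‖ ^ 2) (hg : ∃ w, g w ≠ ⊤)
    (hg_bot : ∀ w, g w ≠ ⊥) (t : ℕ) :
    drMerit f g γ (y (t + 2)) (z (t + 2)) (x (t + 2))
        + (((1 - γ * l - 2 * (γ * K) ^ 2) / (2 * γ) * ‖y (t + 2) - y (t + 1)‖ ^ 2 : ℝ) : EReal)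
      ≤ drMerit f g γ (y (t + 1)) (z (t + 1)) (x (t + 1)) := by
  obtain ⟨α, hα⟩ : ∃ α : ℝ, (α : EReal) = g (z (t + 1)) :=
    ⟨_, EReal.coe_toReal (h.apply_z_ne_top hg t) (hg_bot _)⟩
  obtain ⟨α', hα'⟩ : ∃ α' : ℝ, (α' : EReal) = g (z (t + 2)) :=
    ⟨_, EReal.coe_toReal (h.apply_z_ne_top hg (t + 1)) (hg_bot _)⟩
  have hzmin := h.z_min (t + 1) (z (t + 1))
  rw [← hα, ← hα', ← EReal.coe_add, ← EReal.coe_add, EReal.coe_le_coe_iff] at hzmin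
  have hystep := add_drCoupling_le_of_convexOn (y := y (t + 1)) hγ.ne' hconv (hgrad (y (t + 2)))
    (z (t + 1))
  rw [← h.x_eq_add_smul hγ hgrad (t + 1)] at hystep
  have hzstep := add_drCoupling_le_of_reflected_prox hzmin
  have hxstep := drCoupling_add_sub γ (y (t + 2)) (z (t + 2)) (x (t + 1))
  rw [← h.x_succ] at hxstep
  have hloss : ‖y (t + 2) - z (t + 1)‖ ^ 2 / γ
      ≤ (γ * K * ‖y (t + 2) - y (t + 1)‖) ^ 2 / γ := by
    gcongr
    exact h.norm_y_sub_z_le hγ hgrad hlip t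
  have hcoef : (1 - γ * l - 2 * (γ * K) ^ 2) / (2 * γ) * ‖y (t + 2) - y (t + 1)‖ ^ 2
      = (1 - γ * l) / (2 * γ) * ‖y (t + 2) - y (t + 1)‖ ^ 2
        - (γ * K * ‖y (t + 2) - y (t + 1)‖) ^ 2 / γ := by
    field_simp
  rw [drMerit, drMerit, ← hα, ← hα', hcoef]
  norm_cast
  linarith

end Iterates

section Convergence

variable (h : IsDouglasRachfordSeq f g γ x y z) (hγ : 0 < γ)
  (hgrad : ∀ w, HasGradientAt f (f' w) w) (hlip : LipschitzWith K f')
  (hconv : ConvexOn ℝ Set.univ fun w => f w + l / 2 * ‖w‖ ^ 2)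
  (hstep : 2 * (γ * K) ^ 2 + γ * l < 1) (hg : ∃ w, g w ≠ ⊤) (hg_bot : ∀ w, g w ≠ ⊥)

include h hγ hgrad hlip hconv hstep hg hg_bot

lemma antitone_drMerit :
    Antitone fun t => drMerit f g γ (y (t + 1)) (z (t + 1)) (x (t + 1)) := by
  refine antitone_nat_of_succ_le fun t => le_trans ?_
    (h.drMerit_succ_add_le hγ hgrad hlip hconv hg hg_bot t)
  have hgain : 0 ≤ (1 - γ * l - 2 * (γ * K) ^ 2) / (2 * γ) * ‖y (t + 2) - y (t + 1)‖ ^ 2 :=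
    mul_nonneg (div_nonneg (by linarith) (by positivity)) (by positivity)
  exact le_add_of_nonneg_right (EReal.coe_nonneg.mpr hgain)

variable (hg_lsc : LowerSemicontinuous g) {p : E × E × E}
  (hp : MapClusterPt p atTop fun t => (y t, z t, x t))

include hg_lsc hp

lemma bddBelow_toReal_drMerit :
    BddBelow (Set.range fun t => (drMerit f g γ (y (t + 1)) (z (t + 1)) (x (t + 1))).toReal) := by
  have hf : Continuous f := continuous_iff_continuousAt.mpr fun w => (hgrad w).continuousAt
  refine ⟨(drMerit f g γ p.1 p.2.1 p.2.2).toReal, Set.forall_mem_range.mpr fun t => ?_⟩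
  refine EReal.toReal_le_toReal ?_ (drMerit_ne_bot (hg_bot _) _ _)
    (drMerit_ne_top (h.apply_z_ne_top hg t) _ _)
  exact le_of_mapClusterPt_of_antitone
    (u := fun t => (y (t + 1), z (t + 1), x (t + 1))) (lowerSemicontinuous_drMerit hf hg_lsc p)
    (h.antitone_drMerit hγ hgrad hlip hconv hstep hg hg_bot)
    ((mapClusterPt_comp_add_iff_nat 1).mpr hp) t

lemma tendsto_norm_y_succ_sub : Tendsto (fun t => ‖y (t + 1) - y t‖) atTop (𝓝 0) := by
  let c := (1 - γ * l - 2 * (γ * K) ^ 2) / (2 * γ)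
  have hc : 0 < c := div_pos (by linarith) (by positivity)
  have hdec (t : ℕ) : (drMerit f g γ (y (t + 2)) (z (t + 2)) (x (t + 2))).toReal
      + c * ‖y (t + 2) - y (t + 1)‖ ^ 2
      ≤ (drMerit f g γ (y (t + 1)) (z (t + 1)) (x (t + 1))).toReal := by
    have hle := h.drMerit_succ_add_le hγ hgrad hlip hconv hg hg_bot t
    rwa [← EReal.coe_toReal (drMerit_ne_top (h.apply_z_ne_top hg t) _ _)
        (drMerit_ne_bot (hg_bot _) _ _),
      ← EReal.coe_toReal (drMerit_ne_top (h.apply_z_ne_top hg (t + 1)) _ _)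
        (drMerit_ne_bot (hg_bot _) _ _), ← EReal.coe_add, EReal.coe_le_coe_iff] at hle
  have hgain := tendsto_zero_of_add_le (fun t => by positivity) hdec
    (h.bddBelow_toReal_drMerit hγ hgrad hlip hconv hstep hg hg_bot hg_lsc hp)
  have hsq : Tendsto (fun t => ‖y (t + 2) - y (t + 1)‖ ^ 2) atTop (𝓝 0) := by
    simpa [hc.ne'] using hgain.const_mul c⁻¹
  exact (tendsto_add_atTop_iff_nat 1).mp (by simpa using hsq.sqrt)

lemma tendsto_norm_x_succ_sub : Tendsto (fun t => ‖x (t + 1) - x t‖) atTop (𝓝 0) := by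
  have hy := h.tendsto_norm_y_succ_sub hγ hgrad hlip hconv hstep hg hg_bot hg_lsc hp
  refine squeeze_zero (fun t => norm_nonneg _) (h.norm_x_succ_sub_le hγ hgrad hlip) ?_
  simpa using ((tendsto_add_atTop_iff_nat 1).mpr hy).const_mul (1 + γ * K)

lemma tendsto_norm_z_sub_y : Tendsto (fun t => ‖z (t + 1) - y (t + 1)‖) atTop (𝓝 0) := by
  refine (h.tendsto_norm_x_succ_sub hγ hgrad hlip hconv hstep hg hg_bot hg_lsc hp).congr fun t => ?_
  rw [h.x_succ, add_sub_cancel_left]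

lemma y_eq_z_of_mapClusterPt : p.1 = p.2.1 := by
  have hzy := h.tendsto_norm_z_sub_y hγ hgrad hlip hconv hstep hg hg_bot hg_lsc hp
  refine eq_of_mapClusterPt_of_tendsto_sub_zero
    (hp.continuousAt_comp (f := fun q : E × E × E => (q.1, q.2.1)) (by fun_prop)) ?_
  exact (tendsto_add_atTop_iff_nat 1).mp (tendsto_zero_iff_norm_tendsto_zero.mpr hzy)

end Convergence

end IsDouglasRachfordSeq

end InnerProductSpace

theorem stmt0_general {E : Type*} [NormedAddCommGroup E] [InnerProductSpace ℝ E] [CompleteSpace E]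
    {f : E → ℝ} {f' : E → E} {g : E → EReal} {K : ℝ≥0} {l γ : ℝ} {x y z : ℕ → E} (hγ : 0 < γ)
    (hgrad : ∀ w, HasGradientAt f (f' w) w) (hlip : LipschitzWith K f')
    (hconv : ConvexOn ℝ Set.univ fun w => f w + l / 2 * ‖w‖ ^ 2)
    (hstep : 2 * (γ * K) ^ 2 + γ * l < 1) (hg : ∃ w, g w ≠ ⊤) (hg_bot : ∀ w, g w ≠ ⊥)
    (hg_lsc : LowerSemicontinuous g) (h : IsDouglasRachfordSeq f g γ x y z) :
    (∀ t, 1 ≤ t → drMerit f g γ (y (t + 1)) (z (t + 1)) (x (t + 1))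
      ≤ drMerit f g γ (y t) (z t) (x t)) ∧
    ((∃ p, MapClusterPt p atTop fun t => (y t, z t, x t)) →
      Tendsto (fun t => ‖y (t + 1) - y t‖) atTop (𝓝 0) ∧
      Tendsto (fun t => ‖x (t + 1) - x t‖) atTop (𝓝 0) ∧
      Tendsto (fun t => ‖z (t + 1) - y (t + 1)‖) atTop (𝓝 0)) ∧
    (∀ ys zs xs, MapClusterPt (ys, zs, xs) atTop (fun t => (y t, z t, x t)) →
      ys = zs ∧
      ∀ φ : ℕ → ℕ, StrictMono φ →
        Tendsto (fun j => (y (φ j), z (φ j), x (φ j))) atTop (𝓝 (ys, zs, xs)) →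
        Tendsto (fun j => g (z (φ j))) atTop (𝓝 (g zs))) := by
  refine ⟨fun t ht => ?_, fun ⟨p, hp⟩ => ⟨?_, ?_, ?_⟩, fun ys zs xs hp => ⟨?_, fun φ hφ hlim => ?_⟩⟩
  · obtain ⟨t, rfl⟩ := Nat.exists_eq_add_of_le' ht
    exact h.antitone_drMerit hγ hgrad hlip hconv hstep hg hg_bot t.le_succ
  · exact h.tendsto_norm_y_succ_sub hγ hgrad hlip hconv hstep hg hg_bot hg_lsc hp
  · exact h.tendsto_norm_x_succ_sub hγ hgrad hlip hconv hstep hg hg_bot hg_lsc hp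
  · exact h.tendsto_norm_z_sub_y hγ hgrad hlip hconv hstep hg hg_bot hg_lsc hp
  · exact h.y_eq_z_of_mapClusterPt hγ hgrad hlip hconv hstep hg hg_bot hg_lsc hp
  · exact h.tendsto_apply_z (hg_lsc zs) hφ.tendsto_atTop hlim.snd_nhds.snd_nhds hlim.fst_nhds
      hlim.snd_nhds.fst_nhds

theorem stmt0 {n : ℕ}
    (f : EuclideanSpace ℝ (Fin n) → ℝ)
    (f' : EuclideanSpace ℝ (Fin n) → EuclideanSpace ℝ (Fin n))
    (L l : ℝ) (hL : 0 < L)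
    (hgrad : ∀ w, HasGradientAt f (f' w) w)
    (hlip : LipschitzWith L.toNNReal f')
    (hconv : ConvexOn ℝ Set.univ (fun w => f w + l / 2 * ‖w‖ ^ 2))
    (g : EuclideanSpace ℝ (Fin n) → EReal)
    (hg_proper : ∃ w, g w ≠ ⊤) (hg_ne_bot : ∀ w, g w ≠ ⊥)
    (hg_lsc : LowerSemicontinuous g)
    (γ : ℝ) (hγ : 0 < γ)
    (hstep : (1 + γ * L) ^ 2 + 5 * γ * l / 2 - 3 / 2 < 0)
    (x y z : ℕ → EuclideanSpace ℝ (Fin n))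
    (hy : ∀ t, ∀ w, f (y (t + 1)) + 1 / (2 * γ) * ‖y (t + 1) - x t‖ ^ 2
        ≤ f w + 1 / (2 * γ) * ‖w - x t‖ ^ 2)
    (hz : ∀ t, ∀ w, g (z (t + 1))
          + ((1 / (2 * γ) * ‖(2 : ℝ) • y (t + 1) - x t - z (t + 1)‖ ^ 2 : ℝ) : EReal)
        ≤ g w + ((1 / (2 * γ) * ‖(2 : ℝ) • y (t + 1) - x t - w‖ ^ 2 : ℝ) : EReal))
    (hx : ∀ t, x (t + 1) = x t + (z (t + 1) - y (t + 1)))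
    (D : EuclideanSpace ℝ (Fin n) → EuclideanSpace ℝ (Fin n) → EuclideanSpace ℝ (Fin n) → EReal)
    (hD : ∀ a b c, D a b c
        = (f a : EReal) + g b
          + ((-(1 / (2 * γ)) * ‖a - b‖ ^ 2 + 1 / γ * (inner ℝ (c - a) (b - a) : ℝ) : ℝ) : EReal)) :
    (∀ t, 1 ≤ t → D (y (t + 1)) (z (t + 1)) (x (t + 1)) ≤ D (y t) (z t) (x t)) ∧
    ((∃ p : EuclideanSpace ℝ (Fin n) × EuclideanSpace ℝ (Fin n) × EuclideanSpace ℝ (Fin n),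
        MapClusterPt p atTop (fun t => (y t, z t, x t))) →
      Tendsto (fun t => ‖y (t + 1) - y t‖) atTop (nhds 0) ∧
      Tendsto (fun t => ‖x (t + 1) - x t‖) atTop (nhds 0) ∧
      Tendsto (fun t => ‖z (t + 1) - y (t + 1)‖) atTop (nhds 0)) ∧
    (∀ ys zs xs, MapClusterPt (ys, zs, xs) atTop (fun t => (y t, z t, x t)) →
      ys = zs ∧
      ∀ φ : ℕ → ℕ, StrictMono φ →
        Tendsto (fun j => (y (φ j), z (φ j), x (φ j))) atTop (nhds (ys, zs, xs)) →
        Tendsto (fun j => g (z (φ j))) atTop (nhds (g zs))) := by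
  obtain rfl : D = drMerit f g γ := funext₃ hD
  lift L to ℝ≥0 using hL.le
  rw [Real.toNNReal_coe] at hlip
  obtain ⟨K, m, hK, hm, hKm⟩ := exists_moduli_of_step_lt hγ.le hgrad hlip hconv hstep
  exact stmt0_general hγ hgrad hK hm hKm hg_proper hg_ne_bot hg_lsc ⟨hy, hz, hx⟩
end

section
/- Let C ⊆ ℝⁿ be nonempty closed convex and D ⊆ ℝⁿ be nonempty closed, and suppose that either C or D is compact. Suppose 0 < γ < √(3/2) − 1 and let (yᵗ, zᵗ, xᵗ) be generated by the DR splitting method for the feasibility problem. Then the sequence (yᵗ, zᵗ, xᵗ) is bounded, ‖xᵗ⁺¹ − xᵗ‖ → 0 and ‖zᵗ⁺¹ − yᵗ⁺¹‖ → 0 as t → ∞, and every cluster point (y*, z*, x*) of the sequence satisfies y* = z* with z* ∈ D. -/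
open Filter Topology Bornology

/-!
Let `u t = y (t + 1) - P_C (x t)`. The update of `y` says `x t = y (t + 1) + γ • u t` and that `u t`
is a positive multiple of `x t - P_C (x t)`, hence normal to `C` at `P_C (x t)`; the update of `x`
says `x (t + 1) - z (t + 1) = γ • u t`. Testing the minimality of `z (t + 2)` against the competitor
`z (t + 1) ∈ D` bounds `‖x (t + 2) - y (t + 2)‖` by `γ * ‖u t - 2 • u (t + 1)‖`. Together with the
variational inequality for `P_C` this makes the energy
`γ * (1 - γ) * ‖u t‖ ^ 2 + ‖x (t + 1) - y (t + 1)‖ ^ 2` decrease by at least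
`(1 - γ) * ‖y (t + 2) - y (t + 1)‖ ^ 2` at each step. For `0 < γ < 1` the increments of `y`, which
control those of `x`, therefore tend to zero, and `u t` and `x t - y t` stay bounded; boundedness of
`C` or `D` then anchors the iterates.
-/

section NormedGroup

variable {E : Type*} [SeminormedAddCommGroup E]

theorem isBounded_range_add {ι : Type*} {f g : ι → E} (hf : IsBounded (Set.range f))
    (hg : IsBounded (Set.range g)) : IsBounded (Set.range fun i => f i + g i) :=
  (hf.add hg).subset <| Set.range_subset_iff.2 fun i =>
    Set.add_mem_add (Set.mem_range_self i) (Set.mem_range_self i)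

theorem isBounded_range_of_mul_sq_le {ι : Type*} {f : ι → E} {c K : ℝ} (hc : 0 < c)
    (h : ∀ i, c * ‖f i‖ ^ 2 ≤ K) : IsBounded (Set.range f) :=
  isBounded_iff_forall_norm_le.2 ⟨√(K / c), Set.forall_mem_range.2 fun i =>
    Real.le_sqrt_of_sq_le <| (le_div_iff₀' hc).2 (h i)⟩

end NormedGroup

theorem isBounded_range_of_succ {α : Type*} [PseudoMetricSpace α] {f : ℕ → α}
    (h : IsBounded (Set.range fun t => f (t + 1))) : IsBounded (Set.range f) := by
  rw [← Nat.range_of_succ f]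
  exact isBounded_singleton.union h

theorem eq_of_mapClusterPt_of_tendsto {ι X : Type*} [TopologicalSpace X] [T2Space X]
    {l : Filter ι} {u : ι → X} {a b : X} (ha : MapClusterPt a l u) (hb : Tendsto u l (𝓝 b)) :
    a = b :=
  eq_of_nhds_neBot <| NeBot.mono ha <| inf_le_inf_left _ hb

theorem antitone_of_mul_sq_le_sub_succ {e a : ℕ → ℝ} {c : ℝ} (hc : 0 ≤ c)
    (h : ∀ t, c * a t ^ 2 ≤ e t - e (t + 1)) : Antitone e :=
  antitone_nat_of_succ_le fun t => sub_nonneg.1 <| (mul_nonneg hc (sq_nonneg (a t))).trans (h t)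

theorem tendsto_zero_of_mul_sq_le_sub_succ {e a : ℕ → ℝ} {c : ℝ} (hc : 0 < c)
    (he : BddBelow (Set.range e)) (h : ∀ t, c * a t ^ 2 ≤ e t - e (t + 1)) :
    Tendsto a atTop (𝓝 0) := by
  have he_lim : Tendsto e atTop (𝓝 (⨅ t, e t)) :=
    tendsto_atTop_ciInf (antitone_of_mul_sq_le_sub_succ hc.le h) he
  have hdiff : Tendsto (fun t => (e t - e (t + 1)) / c) atTop (𝓝 0) := by
    simpa using (he_lim.sub (he_lim.comp (tendsto_add_atTop_nat 1))).div_const c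
  have hsq : Tendsto (fun t => a t ^ 2) atTop (𝓝 0) :=
    squeeze_zero (fun t => sq_nonneg (a t)) (fun t => (le_div_iff₀' hc).2 (h t)) hdiff
  exact tendsto_zero_iff_abs_tendsto_zero a |>.2 <| by
    simpa [Function.comp_def, Real.sqrt_sq_eq_abs] using hsq.sqrt

/-- `p` is a metric projection onto `C`: it sends each point to a nearest point of `C`. It
is a predicate on maps, so that uniqueness of nearest points need not be assumed. -/
def IsMetricProjection {X : Type*} [Dist X] (C : Set X) (p : X → X) : Prop :=
  ∀ w, p w ∈ C ∧ ∀ c ∈ C, dist w (p w) ≤ dist w c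

section InnerProduct

variable {E : Type*} [NormedAddCommGroup E] [InnerProductSpace ℝ E]

theorem IsMetricProjection.inner_sub_nonpos {C : Set E} {p : E → E} (hp : IsMetricProjection C p)
    (hC : Convex ℝ C) (w : E) {c : E} (hc : c ∈ C) : inner ℝ (w - p w) (c - p w) ≤ 0 := by
  obtain ⟨hpw, hmin⟩ := hp w
  have : Nonempty C := ⟨⟨p w, hpw⟩⟩
  refine (norm_eq_iInf_iff_real_inner_le_zero hC hpw).1 (le_antisymm ?_ ?_) c hc
  · exact le_ciInf fun c => by simpa only [dist_eq_norm] using hmin c c.2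
  · exact ciInf_le (f := fun c : C => ‖w - c‖)
      ⟨0, Set.forall_mem_range.2 fun _ => norm_nonneg _⟩ ⟨p w, hpw⟩

theorem norm_sub_le_norm_sub_add_of_inner_le {u v q : E} (h : inner ℝ u q ≤ inner ℝ v q) :
    ‖v - u‖ ≤ ‖v - u + q‖ := by
  refine le_of_sq_le_sq ?_ (norm_nonneg _)
  rw [norm_add_sq_real, inner_sub_left]
  linarith [sq_nonneg ‖q‖]

theorem energy_sub_eq (γ : ℝ) (u v a : E) :
    γ * (1 - γ) * ‖u‖ ^ 2 + ‖a + γ • v‖ ^ 2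
        - (γ * (1 - γ) * ‖v‖ ^ 2 + (γ * ‖u - (2 : ℝ) • v‖) ^ 2) =
      (1 - γ) * ‖a‖ ^ 2 +
        γ * (‖a‖ ^ 2 + (1 - 2 * γ) * ‖v - u‖ ^ 2 + 2 * inner ℝ v (a - (v - u))) := by
  simp only [mul_pow, norm_add_sq_real, norm_sub_sq_real, norm_smul, inner_smul_right,
    inner_sub_right, real_inner_self_eq_norm_sq, real_inner_comm v a, real_inner_comm u v,
    Real.norm_eq_abs, sq_abs]
  ring

-- `u` and `v` stand for consecutive residuals, `q` for the increment of the projections between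
-- them, and `b` for the gap `x - y` after the second step.
theorem one_sub_mul_norm_sq_le_energy_sub {γ : ℝ} (hγ : 0 ≤ γ) (hγ1 : γ ≤ 1) {u v q b : E}
    (hu : inner ℝ u q ≤ 0) (hv : 0 ≤ inner ℝ v q) (hb : ‖b‖ ≤ γ * ‖u - (2 : ℝ) • v‖) :
    (1 - γ) * ‖v - u + q‖ ^ 2 ≤
      γ * (1 - γ) * ‖u‖ ^ 2 + ‖v - u + q + γ • v‖ ^ 2
        - (γ * (1 - γ) * ‖v‖ ^ 2 + ‖b‖ ^ 2) := by
  have hb_sq : ‖b‖ ^ 2 ≤ (γ * ‖u - (2 : ℝ) • v‖) ^ 2 := by gcongr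
  have hnorm_sq : ‖v - u‖ ^ 2 ≤ ‖v - u + q‖ ^ 2 := by
    gcongr
    exact norm_sub_le_norm_sub_add_of_inner_le (hu.trans hv)
  -- For `1 / 2 < γ` the coefficient `1 - 2 * γ` is negative; `hnorm_sq` compensates for it.
  have hrest : 0 ≤ ‖v - u + q‖ ^ 2 + (1 - 2 * γ) * ‖v - u‖ ^ 2 + 2 * inner ℝ v q := by
    linarith [mul_nonneg (sub_nonneg.2 hγ1) (sq_nonneg ‖v - u‖)]
  have hid := energy_sub_eq γ u v (v - u + q)
  rw [add_sub_cancel_left] at hid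
  linarith [mul_nonneg hγ hrest]

end InnerProduct

section Iteration

variable {E : Type*} [NormedAddCommGroup E]

/-- The residual of `y (t + 1)` with respect to `C`, where `p` is the projection onto `C`. Since
`y (t + 1)` lies on the segment from `x t` to its projection, this is the gradient of `d_C ^ 2 / 2`
at `y (t + 1)`. -/
def drResidual (p : E → E) (x y : ℕ → E) (t : ℕ) : E :=
  y (t + 1) - p (x t)

theorem y_succ_sub_eq_drResidual_sub_add (p : E → E) (x y : ℕ → E) (t : ℕ) :
    y (t + 2) - y (t + 1) =
      drResidual p x y (t + 1) - drResidual p x y t + (p (x (t + 1)) - p (x t)) := by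
  simp only [drResidual]
  abel

/-- The Lyapunov function of the Douglas–Rachford iteration; its first term is
`γ * (1 - γ) * d_C (y (t + 1)) ^ 2`. -/
def drEnergy (γ : ℝ) (p : E → E) (x y : ℕ → E) (t : ℕ) : ℝ :=
  γ * (1 - γ) * ‖drResidual p x y t‖ ^ 2 + ‖x (t + 1) - y (t + 1)‖ ^ 2

theorem drEnergy_nonneg {γ : ℝ} (hγ : 0 ≤ γ) (hγ1 : γ ≤ 1) (p : E → E) (x y : ℕ → E) (t : ℕ) :
    0 ≤ drEnergy γ p x y t :=
  add_nonneg (mul_nonneg (mul_nonneg hγ (sub_nonneg.2 hγ1)) (sq_nonneg _)) (sq_nonneg _)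

variable [NormedSpace ℝ E]

/-- The sequences `x`, `y`, `z` are generated by the Douglas–Rachford splitting method with
parameter `γ` for the feasibility problem of finding a point of `C ∩ D`, where `p` is the projection
onto `C`. The recursion does not use the initial values `y 0` and `z 0`, which are left arbitrary;
in particular `z 0` need not lie in `D`. -/
structure IsDouglasRachford (γ : ℝ) (p : E → E) (D : Set E) (x y z : ℕ → E) : Prop where
  y_succ : ∀ t, y (t + 1) = (1 / (1 + γ)) • (x t + γ • p (x t))
  z_succ : ∀ t, z (t + 1) ∈ D ∧
    ∀ w ∈ D, ‖(2 : ℝ) • y (t + 1) - x t - z (t + 1)‖ ≤ ‖(2 : ℝ) • y (t + 1) - x t - w‖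
  x_succ : ∀ t, x (t + 1) = x t + (z (t + 1) - y (t + 1))

namespace IsDouglasRachford

variable {γ : ℝ} {p : E → E} {D : Set E} {x y z : ℕ → E}

theorem z_succ_sub_y_succ (h : IsDouglasRachford γ p D x y z) (t : ℕ) :
    z (t + 1) - y (t + 1) = x (t + 1) - x t :=
  eq_sub_of_add_eq' (h.x_succ t).symm

theorem x_sub_y_succ (h : IsDouglasRachford γ p D x y z) (hγ : 1 + γ ≠ 0) (t : ℕ) :
    x t - y (t + 1) = γ • drResidual p x y t := by
  have hy : (1 + γ) • y (t + 1) = x t + γ • p (x t) := by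
    rw [h.y_succ, one_div, smul_inv_smul₀ hγ]
  calc x t - y (t + 1)
      = (1 + γ) • y (t + 1) - γ • p (x t) - y (t + 1) := by rw [hy, add_sub_cancel_right]
    _ = γ • drResidual p x y t := by
        rw [drResidual]
        module

theorem x_sub_proj (h : IsDouglasRachford γ p D x y z) (hγ : 1 + γ ≠ 0) (t : ℕ) :
    x t - p (x t) = (1 + γ) • drResidual p x y t := by
  rw [← sub_add_sub_cancel (x t) (y (t + 1)), h.x_sub_y_succ hγ, ← drResidual]
  module

theorem x_succ_sub_z_succ (h : IsDouglasRachford γ p D x y z) (hγ : 1 + γ ≠ 0) (t : ℕ) :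
    x (t + 1) - z (t + 1) = γ • drResidual p x y t := by
  rw [← h.x_sub_y_succ hγ, h.x_succ]
  abel

theorem norm_x_succ_sub_y_succ_le (h : IsDouglasRachford γ p D x y z) (hγ : 0 ≤ γ) (t : ℕ) :
    ‖x (t + 2) - y (t + 2)‖ ≤
      γ * ‖drResidual p x y t - (2 : ℝ) • drResidual p x y (t + 1)‖ := by
  have hγ' : 1 + γ ≠ 0 := by positivity
  have hz : (2 : ℝ) • y (t + 2) - x (t + 1) - z (t + 2) = -(x (t + 2) - y (t + 2)) := by
    rw [h.x_succ (t + 1)]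
    module
  have hw : (2 : ℝ) • y (t + 2) - x (t + 1) - z (t + 1) =
      γ • (drResidual p x y t - (2 : ℝ) • drResidual p x y (t + 1)) := by
    rw [smul_sub, smul_comm γ (2 : ℝ), ← h.x_succ_sub_z_succ hγ', ← h.x_sub_y_succ hγ']
    module
  calc ‖x (t + 2) - y (t + 2)‖
      = ‖(2 : ℝ) • y (t + 2) - x (t + 1) - z (t + 2)‖ := by rw [hz, norm_neg]
    _ ≤ ‖(2 : ℝ) • y (t + 2) - x (t + 1) - z (t + 1)‖ :=
        (h.z_succ (t + 1)).2 (z (t + 1)) (h.z_succ t).1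
    _ = γ * ‖drResidual p x y t - (2 : ℝ) • drResidual p x y (t + 1)‖ := by
        rw [hw, norm_smul, Real.norm_of_nonneg hγ]

theorem isBounded_range_y_succ_of_right (h : IsDouglasRachford γ p D x y z) (hD : IsBounded D)
    (hx : IsBounded (Set.range fun t => x t - x (t + 1))) :
    IsBounded (Set.range fun t => y (t + 1)) := by
  have hz : IsBounded (Set.range fun t => z (t + 1)) :=
    hD.subset (Set.range_subset_iff.2 fun t => (h.z_succ t).1)
  have hy_eq (t : ℕ) : z (t + 1) + (x t - x (t + 1)) = y (t + 1) := by
    rw [h.x_succ]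
    abel
  simpa only [hy_eq] using isBounded_range_add hz hx

theorem eq_and_mem_of_mapClusterPt (h : IsDouglasRachford γ p D x y z) (hD : IsClosed D)
    (hzy : Tendsto (fun t => ‖z (t + 1) - y (t + 1)‖) atTop (𝓝 0)) {ys zs xs : E}
    (hcl : MapClusterPt (ys, zs, xs) atTop fun t => (y t, z t, x t)) : ys = zs ∧ zs ∈ D := by
  have hzy_lim : Tendsto (fun t => z t - y t) atTop (𝓝 0) :=
    (tendsto_add_atTop_iff_nat 1).1 (tendsto_zero_iff_norm_tendsto_zero.2 hzy)
  have hzy_cl : MapClusterPt (zs - ys) atTop fun t => z t - y t :=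
    hcl.continuousAt_comp (f := fun q : E × E × E => q.2.1 - q.1) (by fun_prop)
  have hz_cl : MapClusterPt zs atTop z :=
    hcl.continuousAt_comp (f := fun q : E × E × E => q.2.1) (by fun_prop)
  have hz_mem : ∀ᶠ t in atTop, z t ∈ D :=
    eventually_atTop.2 ⟨1, fun t ht => Nat.sub_add_cancel ht ▸ (h.z_succ (t - 1)).1⟩
  exact ⟨(sub_eq_zero.1 (eq_of_mapClusterPt_of_tendsto hzy_cl hzy_lim)).symm,
    hD.mem_of_mapClusterPt hz_cl hz_mem⟩

end IsDouglasRachford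

end Iteration

namespace IsDouglasRachford

variable {E : Type*} [NormedAddCommGroup E] [InnerProductSpace ℝ E]
  {γ : ℝ} {p : E → E} {C D : Set E} {x y z : ℕ → E}

theorem inner_drResidual_nonpos (h : IsDouglasRachford γ p D x y z) (hp : IsMetricProjection C p)
    (hC : Convex ℝ C) (hγ : 0 ≤ γ) (t : ℕ) {c : E} (hc : c ∈ C) :
    inner ℝ (drResidual p x y t) (c - p (x t)) ≤ 0 := by
  have hvi := hp.inner_sub_nonpos hC (x t) hc
  rw [h.x_sub_proj (by positivity), real_inner_smul_left] at hvi
  exact nonpos_of_mul_nonpos_right hvi (by positivity)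

theorem inner_drResidual_succ_nonneg (h : IsDouglasRachford γ p D x y z)
    (hp : IsMetricProjection C p) (hC : Convex ℝ C) (hγ : 0 ≤ γ) (t : ℕ) :
    0 ≤ inner ℝ (drResidual p x y (t + 1)) (p (x (t + 1)) - p (x t)) := by
  rw [← neg_sub, inner_neg_right, neg_nonneg]
  exact h.inner_drResidual_nonpos hp hC hγ (t + 1) (hp (x t)).1

theorem one_sub_mul_norm_sq_le_drEnergy_sub (h : IsDouglasRachford γ p D x y z)
    (hp : IsMetricProjection C p) (hC : Convex ℝ C) (hγ : 0 ≤ γ) (hγ1 : γ ≤ 1) (t : ℕ) :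
    (1 - γ) * ‖y (t + 2) - y (t + 1)‖ ^ 2 ≤ drEnergy γ p x y t - drEnergy γ p x y (t + 1) := by
  have hgap : x (t + 1) - y (t + 1) =
      y (t + 2) - y (t + 1) + γ • drResidual p x y (t + 1) := by
    rw [← h.x_sub_y_succ (by positivity)]
    abel
  rw [drEnergy, drEnergy, hgap, y_succ_sub_eq_drResidual_sub_add p x y]
  exact one_sub_mul_norm_sq_le_energy_sub hγ hγ1
    (h.inner_drResidual_nonpos hp hC hγ t (hp (x (t + 1))).1)
    (h.inner_drResidual_succ_nonneg hp hC hγ t) (h.norm_x_succ_sub_y_succ_le hγ t)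

theorem norm_x_succ_sub_le (h : IsDouglasRachford γ p D x y z) (hp : IsMetricProjection C p)
    (hC : Convex ℝ C) (hγ : 0 ≤ γ) (t : ℕ) :
    ‖x (t + 1) - x t‖ ≤ (1 + γ) * ‖y (t + 2) - y (t + 1)‖ := by
  have hγ' : 1 + γ ≠ 0 := by positivity
  have hres : ‖drResidual p x y (t + 1) - drResidual p x y t‖ ≤ ‖y (t + 2) - y (t + 1)‖ := by
    rw [y_succ_sub_eq_drResidual_sub_add p x y]
    exact norm_sub_le_norm_sub_add_of_inner_le <|
      (h.inner_drResidual_nonpos hp hC hγ t (hp (x (t + 1))).1).trans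
        (h.inner_drResidual_succ_nonneg hp hC hγ t)
  have hdecomp : x (t + 1) - x t =
      y (t + 2) - y (t + 1) + γ • (drResidual p x y (t + 1) - drResidual p x y t) := by
    rw [smul_sub, ← h.x_sub_y_succ hγ', ← h.x_sub_y_succ hγ']
    abel
  calc ‖x (t + 1) - x t‖
      ≤ ‖y (t + 2) - y (t + 1)‖ + γ * ‖drResidual p x y (t + 1) - drResidual p x y t‖ := by
        rw [hdecomp, ← norm_smul_of_nonneg hγ]
        exact norm_add_le _ _
    _ ≤ ‖y (t + 2) - y (t + 1)‖ + γ * ‖y (t + 2) - y (t + 1)‖ := by gcongr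
    _ = (1 + γ) * ‖y (t + 2) - y (t + 1)‖ := by ring

theorem tendsto_norm_x_succ_sub (h : IsDouglasRachford γ p D x y z) (hp : IsMetricProjection C p)
    (hC : Convex ℝ C) (hγ : 0 ≤ γ) (hγ1 : γ < 1) :
    Tendsto (fun t => ‖x (t + 1) - x t‖) atTop (𝓝 0) := by
  have hbdd : BddBelow (Set.range (drEnergy γ p x y)) :=
    ⟨0, Set.forall_mem_range.2 (drEnergy_nonneg hγ hγ1.le p x y)⟩
  have hy : Tendsto (fun t => ‖y (t + 2) - y (t + 1)‖) atTop (𝓝 0) :=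
    tendsto_zero_of_mul_sq_le_sub_succ (sub_pos.2 hγ1) hbdd
      (h.one_sub_mul_norm_sq_le_drEnergy_sub hp hC hγ hγ1.le)
  exact squeeze_zero (fun t => norm_nonneg _) (h.norm_x_succ_sub_le hp hC hγ)
    (by simpa only [mul_zero] using hy.const_mul (1 + γ))

theorem antitone_drEnergy (h : IsDouglasRachford γ p D x y z) (hp : IsMetricProjection C p)
    (hC : Convex ℝ C) (hγ : 0 ≤ γ) (hγ1 : γ ≤ 1) : Antitone (drEnergy γ p x y) :=
  antitone_of_mul_sq_le_sub_succ (sub_nonneg.2 hγ1)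
    (h.one_sub_mul_norm_sq_le_drEnergy_sub hp hC hγ hγ1)

theorem isBounded_range_drResidual (h : IsDouglasRachford γ p D x y z)
    (hp : IsMetricProjection C p) (hC : Convex ℝ C) (hγ : 0 < γ) (hγ1 : γ < 1) :
    IsBounded (Set.range (drResidual p x y)) :=
  isBounded_range_of_mul_sq_le (mul_pos hγ (sub_pos.2 hγ1)) fun t =>
    (le_add_of_nonneg_right (sq_nonneg _)).trans
      (h.antitone_drEnergy hp hC hγ.le hγ1.le (Nat.zero_le t))

theorem isBounded_range_x_succ_sub_y_succ (h : IsDouglasRachford γ p D x y z)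
    (hp : IsMetricProjection C p) (hC : Convex ℝ C) (hγ : 0 ≤ γ) (hγ1 : γ ≤ 1) :
    IsBounded (Set.range fun t => x (t + 1) - y (t + 1)) := by
  refine isBounded_range_of_mul_sq_le (K := drEnergy γ p x y 0) one_pos fun t => ?_
  calc 1 * ‖x (t + 1) - y (t + 1)‖ ^ 2
      ≤ drEnergy γ p x y t := by
        rw [one_mul]
        exact le_add_of_nonneg_left
          (mul_nonneg (mul_nonneg hγ (sub_nonneg.2 hγ1)) (sq_nonneg _))
    _ ≤ drEnergy γ p x y 0 := h.antitone_drEnergy hp hC hγ hγ1 (Nat.zero_le t)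

theorem isBounded_range_y_succ_of_left (h : IsDouglasRachford γ p D x y z)
    (hp : IsMetricProjection C p) (hC : Convex ℝ C) (hC_bdd : IsBounded C) (hγ : 0 < γ)
    (hγ1 : γ < 1) : IsBounded (Set.range fun t => y (t + 1)) := by
  have hproj : IsBounded (Set.range fun t => p (x t)) :=
    hC_bdd.subset (Set.range_subset_iff.2 fun t => (hp (x t)).1)
  simpa only [drResidual, sub_add_cancel] using
    isBounded_range_add (h.isBounded_range_drResidual hp hC hγ hγ1) hproj

theorem isBounded_range (h : IsDouglasRachford γ p D x y z) (hp : IsMetricProjection C p)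
    (hC : Convex ℝ C) (hCD : IsBounded C ∨ IsBounded D) (hγ : 0 < γ) (hγ1 : γ < 1) :
    IsBounded (Set.range fun t => (y t, z t, x t)) := by
  have hdx_lim : Tendsto (fun t => x (t + 1) - x t) atTop (𝓝 0) :=
    tendsto_zero_iff_norm_tendsto_zero.2 (h.tendsto_norm_x_succ_sub hp hC hγ.le hγ1)
  have hdx_neg : IsBounded (Set.range fun t => x t - x (t + 1)) :=
    Metric.isBounded_range_of_tendsto _ (by simpa only [neg_sub] using hdx_lim.neg)
  have hy : IsBounded (Set.range fun t => y (t + 1)) :=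
    hCD.elim (fun hC_bdd => h.isBounded_range_y_succ_of_left hp hC hC_bdd hγ hγ1)
      fun hD_bdd => h.isBounded_range_y_succ_of_right hD_bdd hdx_neg
  have hz : IsBounded (Set.range fun t => z (t + 1)) := by
    simpa only [← h.z_succ_sub_y_succ, add_sub_cancel] using
      isBounded_range_add hy (Metric.isBounded_range_of_tendsto _ hdx_lim)
  have hx : IsBounded (Set.range fun t => x (t + 1)) := by
    simpa only [add_sub_cancel] using
      isBounded_range_add hy (h.isBounded_range_x_succ_sub_y_succ hp hC hγ.le hγ1.le)
  exact isBounded_range_of_succ <| (hy.prod (hz.prod hx)).subset <| Set.range_subset_iff.2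
    fun t => ⟨Set.mem_range_self t, Set.mem_range_self t, Set.mem_range_self t⟩

end IsDouglasRachford

theorem stmt3_general {E : Type*} [NormedAddCommGroup E] [InnerProductSpace ℝ E] {C D : Set E}
    (hC : Convex ℝ C) (hD : IsClosed D) (hCD : IsBounded C ∨ IsBounded D) {γ : ℝ} (hγ : 0 < γ)
    (hγ1 : γ < 1) {p : E → E} (hp : IsMetricProjection C p) {x y z : ℕ → E}
    (h : IsDouglasRachford γ p D x y z) :
    IsBounded (Set.range fun t => (y t, z t, x t)) ∧
    Tendsto (fun t => ‖x (t + 1) - x t‖) atTop (𝓝 0) ∧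
    Tendsto (fun t => ‖z (t + 1) - y (t + 1)‖) atTop (𝓝 0) ∧
    ∀ ys zs xs, MapClusterPt (ys, zs, xs) atTop (fun t => (y t, z t, x t)) →
      ys = zs ∧ zs ∈ D := by
  have hx := h.tendsto_norm_x_succ_sub hp hC hγ.le hγ1
  have hzy : Tendsto (fun t => ‖z (t + 1) - y (t + 1)‖) atTop (𝓝 0) := by
    simpa only [h.z_succ_sub_y_succ] using hx
  exact ⟨h.isBounded_range hp hC hCD hγ hγ1, hx, hzy,
    fun _ _ _ hcl => h.eq_and_mem_of_mapClusterPt hD hzy hcl⟩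

theorem sqrt_three_halves_sub_one_lt_one : √(3 / 2) - 1 < (1 : ℝ) := by
  rw [sub_lt_iff_lt_add, Real.sqrt_lt' (by norm_num)]
  norm_num

theorem stmt3 {n : ℕ}
    (C D : Set (EuclideanSpace ℝ (Fin n)))
    (hCne : C.Nonempty) (hCclosed : IsClosed C) (hCconv : Convex ℝ C)
    (hDne : D.Nonempty) (hDclosed : IsClosed D)
    (hcompact : IsCompact C ∨ IsCompact D)
    (γ : ℝ) (hγ : 0 < γ) (hγ' : γ < Real.sqrt (3 / 2) - 1)
    (pC : EuclideanSpace ℝ (Fin n) → EuclideanSpace ℝ (Fin n))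
    (hpC : ∀ w, pC w ∈ C ∧ ∀ c ∈ C, dist w (pC w) ≤ dist w c)
    (x y z : ℕ → EuclideanSpace ℝ (Fin n))
    (hy : ∀ t, y (t + 1) = (1 / (1 + γ)) • (x t + γ • pC (x t)))
    (hz : ∀ t, z (t + 1) ∈ D ∧
      ∀ w ∈ D, ‖(2 : ℝ) • y (t + 1) - x t - z (t + 1)‖ ≤ ‖(2 : ℝ) • y (t + 1) - x t - w‖)
    (hx : ∀ t, x (t + 1) = x t + (z (t + 1) - y (t + 1))) :
    IsBounded (Set.range fun t => (y t, z t, x t)) ∧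
    Tendsto (fun t => ‖x (t + 1) - x t‖) atTop (nhds 0) ∧
    Tendsto (fun t => ‖z (t + 1) - y (t + 1)‖) atTop (nhds 0) ∧
    ∀ ys zs xs, MapClusterPt (ys, zs, xs) atTop (fun t => (y t, z t, x t)) →
      ys = zs ∧ zs ∈ D :=
  stmt3_general hCconv hDclosed (hcompact.imp IsCompact.isBounded IsCompact.isBounded) hγ
    (hγ'.trans sqrt_three_halves_sub_one_lt_one) hpC ⟨hy, hz, hx⟩
end

section
/- Let H be a real Hilbert space, C ⊆ H a nonempty closed convex set, γ > 0 and x ∈ H. Then the point y* := (1/(1+γ))·(x + γ P_C(x)) is the unique minimizer over H of the function φ(y) := (1/2)·d_C(y)² + (1/(2γ))‖y − x‖². -/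
/-!
Let `p` be the nearest point of `C` to `x` and `y = (x + γ p) / (1 + γ)`. Since `y - p` is a
positive multiple of `x - p`, it makes a nonpositive inner product with `c - p` for every `c ∈ C`,
which makes `y - p` a subgradient of `d_C² / 2` at `y`. It equals `(x - y) / γ`, so its linear term
cancels the first-order term of `‖w - x‖² / (2γ)` at `y`, and the objective at any `w` exceeds its
value at `y` by at least `‖w - y‖² / (2γ)`.
-/

open scoped RealInnerProductSpace

section PseudoMetricSpace

variable {α : Type*} [PseudoMetricSpace α]

theorem le_sq_infDist {s : Set α} (hs : s.Nonempty) {x : α} {a : ℝ}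
    (h : ∀ c ∈ s, a ≤ dist x c ^ 2) : a ≤ Metric.infDist x s ^ 2 := by
  have sqrt_le : √a ≤ Metric.infDist x s :=
    (Metric.le_infDist hs).2 fun c hc => Real.sqrt_le_iff.2 ⟨dist_nonneg, h c hc⟩
  exact (Real.sqrt_le_iff.1 sqrt_le).2

end PseudoMetricSpace

section SeminormedAddCommGroup

variable {E : Type*} [SeminormedAddCommGroup E] [InnerProductSpace ℝ E]
  {s : Set E} {f : E → ℝ} {p x y : E} {γ : ℝ}

/-- `g` is a subgradient of `f` at `y`, that is, `g ∈ ∂f(y)`, with `g` identified with a continuous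
linear functional through the inner product. It serves to express the first-order optimality
condition of the proximal problem for `f`. -/
def IsSubgradientAt (f : E → ℝ) (g y : E) : Prop :=
  ∀ w, f y + ⟪g, w - y⟫ ≤ f w

theorem isSubgradientAt_half_sq_infDist (hp : p ∈ s) (hy : ∀ c ∈ s, ⟪y - p, c - p⟫ ≤ 0) :
    IsSubgradientAt (fun w => 1 / 2 * Metric.infDist w s ^ 2) (y - p) y := by
  intro w
  have upper : Metric.infDist y s ^ 2 ≤ ‖y - p‖ ^ 2 := by
    rw [← dist_eq_norm]
    gcongr
    · exact Metric.infDist_nonneg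
    · exact Metric.infDist_le_dist_of_mem hp
  have lower : ‖y - p‖ ^ 2 + 2 * ⟪y - p, w - y⟫ ≤ Metric.infDist w s ^ 2 := by
    refine le_sq_infDist ⟨p, hp⟩ fun c hc => ?_
    calc ‖y - p‖ ^ 2 + 2 * ⟪y - p, w - y⟫
        ≤ ‖y - p‖ ^ 2 + 2 * (⟪y - p, w - y⟫ - ⟪y - p, c - p⟫) + ‖(w - y) - (c - p)‖ ^ 2 := by
          linarith [hy c hc, sq_nonneg ‖(w - y) - (c - p)‖]
      _ = ‖(y - p) + ((w - y) - (c - p))‖ ^ 2 := by rw [norm_add_sq_real, inner_sub_right _ (w - y)]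
      _ = dist w c ^ 2 := by rw [dist_eq_norm]; congr 2; abel
  linarith

namespace IsSubgradientAt

theorem add_norm_sub_sq_add_le (hf : IsSubgradientAt f (γ⁻¹ • (x - y)) y) (w : E) :
    f y + 1 / (2 * γ) * ‖y - x‖ ^ 2 + 1 / (2 * γ) * ‖w - y‖ ^ 2
      ≤ f w + 1 / (2 * γ) * ‖w - x‖ ^ 2 := by
  have expand : ‖w - x‖ ^ 2 = ‖w - y‖ ^ 2 - 2 * ⟪x - y, w - y⟫ + ‖y - x‖ ^ 2 := by
    rw [← sub_sub_sub_cancel_right w x y, norm_sub_sq_real, real_inner_comm, norm_sub_rev x y]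
  have subgradient : f y + γ⁻¹ * ⟪x - y, w - y⟫ ≤ f w := by
    simpa only [real_inner_smul_left] using hf w
  calc f y + 1 / (2 * γ) * ‖y - x‖ ^ 2 + 1 / (2 * γ) * ‖w - y‖ ^ 2
      = f y + γ⁻¹ * ⟪x - y, w - y⟫ + 1 / (2 * γ) * ‖w - x‖ ^ 2 := by rw [expand]; ring
    _ ≤ f w + 1 / (2 * γ) * ‖w - x‖ ^ 2 := by gcongr

theorem add_norm_sub_sq_le (hf : IsSubgradientAt f (γ⁻¹ • (x - y)) y) (hγ : 0 ≤ γ) (w : E) :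
    f y + 1 / (2 * γ) * ‖y - x‖ ^ 2 ≤ f w + 1 / (2 * γ) * ‖w - x‖ ^ 2 :=
  le_of_add_le_of_nonneg_left (hf.add_norm_sub_sq_add_le w) (by positivity)

end IsSubgradientAt

end SeminormedAddCommGroup

section NormedAddCommGroup

variable {E : Type*} [NormedAddCommGroup E] [InnerProductSpace ℝ E]
  {s : Set E} {f : E → ℝ} {p x y : E} {γ : ℝ}

theorem IsSubgradientAt.eq_of_add_norm_sub_sq_le
    (hf : IsSubgradientAt f (γ⁻¹ • (x - y)) y) (hγ : 0 < γ)
    {w : E} (hw : f w + 1 / (2 * γ) * ‖w - x‖ ^ 2 ≤ f y + 1 / (2 * γ) * ‖y - x‖ ^ 2) :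
    w = y := by
  have scaled_nonpos : 1 / (2 * γ) * ‖w - y‖ ^ 2 ≤ 0 := by
    linarith [hf.add_norm_sub_sq_add_le w]
  have sq_nonpos : ‖w - y‖ ^ 2 ≤ 0 := nonpos_of_mul_nonpos_right scaled_nonpos (by positivity)
  exact sub_eq_zero.1 (norm_eq_zero.1 ((sq_nonpos_iff _).1 sq_nonpos))

theorem real_inner_sub_sub_nonpos_of_forall_dist_le (hs : Convex ℝ s) (hp : p ∈ s)
    (hmin : ∀ c ∈ s, dist x p ≤ dist x c) {c : E} (hc : c ∈ s) : ⟪x - p, c - p⟫ ≤ 0 := by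
  refine (norm_eq_iInf_iff_real_inner_le_zero hs hp).1 ?_ c hc
  have isMinOn : IsMinOn (fun c => ‖x - c‖) s p :=
    isMinOn_iff.2 fun c hc => by simpa only [dist_eq_norm] using hmin c hc
  exact (isMinOn.iInf_eq hp).symm

theorem isSubgradientAt_half_sq_infDist_smul_add (hs : Convex ℝ s) (hp : p ∈ s)
    (hmin : ∀ c ∈ s, dist x p ≤ dist x c) (hγ : 0 < γ) :
    IsSubgradientAt (fun w => 1 / 2 * Metric.infDist w s ^ 2)
      (γ⁻¹ • (x - (1 / (1 + γ)) • (x + γ • p))) ((1 / (1 + γ)) • (x + γ • p)) := by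
  set y := (1 / (1 + γ)) • (x + γ • p) with hy
  have sub_nearest : y - p = (1 / (1 + γ)) • (x - p) := by
    rw [hy]
    match_scalars <;> field_simp
    ring
  have smul_sub : γ⁻¹ • (x - y) = y - p := by
    rw [hy]
    match_scalars <;> field_simp <;> ring
  rw [smul_sub]
  refine isSubgradientAt_half_sq_infDist hp fun c hc => ?_
  rw [sub_nearest, real_inner_smul_left]
  exact mul_nonpos_of_nonneg_of_nonpos (by positivity)
    (real_inner_sub_sub_nonpos_of_forall_dist_le hs hp hmin hc)

end NormedAddCommGroup

theorem stmt6_general {E : Type*} [NormedAddCommGroup E] [InnerProductSpace ℝ E]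
    {s : Set E} (hs : Convex ℝ s) {p x : E} (hp : p ∈ s) (hmin : ∀ c ∈ s, dist x p ≤ dist x c)
    {γ : ℝ} (hγ : 0 < γ) :
    (∀ w, 1 / 2 * Metric.infDist ((1 / (1 + γ)) • (x + γ • p)) s ^ 2
        + 1 / (2 * γ) * ‖(1 / (1 + γ)) • (x + γ • p) - x‖ ^ 2
        ≤ 1 / 2 * Metric.infDist w s ^ 2 + 1 / (2 * γ) * ‖w - x‖ ^ 2) ∧
    ∀ w, (∀ u, 1 / 2 * Metric.infDist w s ^ 2 + 1 / (2 * γ) * ‖w - x‖ ^ 2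
        ≤ 1 / 2 * Metric.infDist u s ^ 2 + 1 / (2 * γ) * ‖u - x‖ ^ 2) →
      w = (1 / (1 + γ)) • (x + γ • p) :=
  have subgradient := isSubgradientAt_half_sq_infDist_smul_add hs hp hmin hγ
  ⟨subgradient.add_norm_sub_sq_le hγ.le, fun _ hw => subgradient.eq_of_add_norm_sub_sq_le hγ (hw _)⟩

theorem stmt6 {H : Type*} [NormedAddCommGroup H] [InnerProductSpace ℝ H] [CompleteSpace H]
    (C : Set H) (hCne : C.Nonempty) (hCclosed : IsClosed C) (hCconv : Convex ℝ C)
    (pC : H → H) (hpC : ∀ w, pC w ∈ C ∧ ∀ c ∈ C, dist w (pC w) ≤ dist w c)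
    (γ : ℝ) (hγ : 0 < γ) (x : H) :
    (∀ w, 1 / 2 * Metric.infDist ((1 / (1 + γ)) • (x + γ • pC x)) C ^ 2
        + 1 / (2 * γ) * ‖(1 / (1 + γ)) • (x + γ • pC x) - x‖ ^ 2
        ≤ 1 / 2 * Metric.infDist w C ^ 2 + 1 / (2 * γ) * ‖w - x‖ ^ 2) ∧
    ∀ w, (∀ u, 1 / 2 * Metric.infDist w C ^ 2 + 1 / (2 * γ) * ‖w - x‖ ^ 2
        ≤ 1 / 2 * Metric.infDist u C ^ 2 + 1 / (2 * γ) * ‖u - x‖ ^ 2) →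
      w = (1 / (1 + γ)) • (x + γ • pC x) :=
  stmt6_general hCconv (hpC x).1 (hpC x).2 hγ
end

section
/- Let θ ∈ (0, 1/2] and M > 0, and let (l_t) be a nonincreasing sequence of positive real numbers with l_t → 0 such that l_t − l_{t+1} ≥ M·l_t^{2θ} for all sufficiently large t. Then M < 1 and there exist μ > 0 and η ∈ (0,1) such that l_t ≤ μ·ηᵗ for all sufficiently large t. -/
open Filter Topology

/-!
Once `l t ≤ 1`, the exponent `2 * θ ≤ 1` gives `l t ≤ l t ^ (2 * θ)`, so the decrease assumption
becomes the contraction `l (t + 1) ≤ (1 - M) * l t`. Positivity of `l` forces `0 < 1 - M`, and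
iterating the contraction yields the rate `η = 1 - M`.
-/

theorem le_one_sub_mul_of_mul_rpow_le_sub {x y M p : ℝ} (hx₀ : 0 ≤ x) (hx₁ : x ≤ 1) (hp : p ≤ 1)
    (hM : 0 ≤ M) (h : M * x ^ p ≤ x - y) : y ≤ (1 - M) * x := by
  have hlin : M * x ≤ x - y := calc
    M * x ≤ M * x ^ p := by gcongr; exact Real.self_le_rpow_of_le_one hx₀ hx₁ hp
    _ ≤ x - y := h
  linarith

theorem exists_pos_eventually_le_mul_pow {K : Type*} [Field K] [LinearOrder K]
    [IsStrictOrderedRing K] {u : ℕ → K} {c : K} (hc : 0 < c)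
    (h : ∀ᶠ t in atTop, u (t + 1) ≤ c * u t) :
    ∃ μ > 0, ∀ᶠ t in atTop, u t ≤ μ * c ^ t := by
  obtain ⟨N, hN⟩ := eventually_atTop.1 h
  refine ⟨max 1 (u N / c ^ N), lt_max_of_lt_left one_pos, eventually_atTop.2 ⟨N, fun t ht ↦ ?_⟩⟩
  induction t, ht using Nat.le_induction with
  | base => exact (div_le_iff₀ (pow_pos hc N)).1 (le_max_right _ _)
  | succ t ht ih => calc
      u (t + 1) ≤ c * u t := hN t ht
      _ ≤ c * (max 1 (u N / c ^ N) * c ^ t) := by gcongr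
      _ = max 1 (u N / c ^ N) * c ^ (t + 1) := by ring

theorem stmt15 (θ M : ℝ) (hθ : θ ∈ Set.Ioc (0 : ℝ) (1 / 2)) (hM : 0 < M)
    (l : ℕ → ℝ) (hpos : ∀ t, 0 < l t) (hmono : Antitone l)
    (hlim : Tendsto l atTop (nhds 0))
    (h : ∀ᶠ t in atTop, M * l t ^ (2 * θ) ≤ l t - l (t + 1)) :
    M < 1 ∧ ∃ μ > (0 : ℝ), ∃ η ∈ Set.Ioo (0 : ℝ) 1, ∀ᶠ t in atTop, l t ≤ μ * η ^ t := by
  have hcontr : ∀ᶠ t in atTop, l (t + 1) ≤ (1 - M) * l t := by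
    filter_upwards [h, hlim.eventually_le_const one_pos] with t ht hle
    exact le_one_sub_mul_of_mul_rpow_le_sub (hpos t).le hle (by linarith [hθ.2]) hM.le ht
  have hη : 0 < 1 - M := by
    obtain ⟨t, ht⟩ := hcontr.exists
    exact pos_of_mul_pos_left ((hpos (t + 1)).trans_le ht) (hpos t).le
  obtain ⟨μ, hμ, hbound⟩ := exists_pos_eventually_le_mul_pow hη hcontr
  exact ⟨sub_pos.1 hη, μ, hμ, 1 - M, ⟨hη, sub_lt_self 1 hM⟩, hbound⟩
end

section
/- Let θ ∈ (1/2, 1) and M > 0, and let (l_t) be a nonincreasing sequence of positive real numbers such that l_t − l_{t+1} ≥ M·l_t^{2θ} for all sufficiently large t. Then there exists κ > 0 such that l_t ≤ κ·t^{−1/(2θ−1)} for all sufficiently large t. -/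
open Filter Topology

/-!
With `p = 2θ - 1`, the recursion is a discrete analogue of `l' ≤ -M l ^ (p + 1)`, whose solutions
satisfy `(l ^ (-p))' ≥ p M`. Convexity of `x ↦ x ^ (-p)` transfers this to the sequence: each step
increases `l t ^ (-p)` by at least `p M`. Hence `l t ^ (-p)` grows at least linearly, and inverting
the power gives the rate `t ^ (-1 / p)`.
-/

section PowerDecrease

variable {p M a b : ℝ} {l : ℕ → ℝ}

theorem one_add_mul_one_sub_le_rpow_neg (hp : 0 ≤ p) (ha : 0 < a) :
    1 + p * (1 - a) ≤ a ^ (-p) :=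
  calc 1 + p * (1 - a) ≤ 1 + p * -Real.log a := by
        gcongr
        linarith [Real.log_le_sub_one_of_pos ha]
    _ = Real.log a * -p + 1 := by ring
    _ ≤ Real.exp (Real.log a * -p) := Real.add_one_le_exp _
    _ = a ^ (-p) := (Real.rpow_def_of_pos ha _).symm

theorem rpow_neg_add_mul_sub_le_rpow_neg (hp : 0 ≤ p) (ha : 0 < a) (hb : 0 < b) :
    a ^ (-p) + p * a ^ (-(p + 1)) * (a - b) ≤ b ^ (-p) := by
  have hpow : a ^ (-(p + 1)) = a ^ (-p) / a := by
    rw [neg_add, ← sub_eq_add_neg, Real.rpow_sub_one ha.ne']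
  calc a ^ (-p) + p * a ^ (-(p + 1)) * (a - b) = a ^ (-p) * (1 + p * (1 - b / a)) := by
        rw [hpow]
        field_simp
    _ ≤ a ^ (-p) * (b / a) ^ (-p) := by
        gcongr
        exact one_add_mul_one_sub_le_rpow_neg hp (div_pos hb ha)
    _ = b ^ (-p) := by
        rw [← Real.mul_rpow ha.le (div_pos hb ha).le, mul_div_cancel₀ b ha.ne']

theorem rpow_neg_add_mul_le_rpow_neg_of_mul_rpow_le_sub (hp : 0 ≤ p) (ha : 0 < a) (hb : 0 < b)
    (h : M * a ^ (p + 1) ≤ a - b) : a ^ (-p) + p * M ≤ b ^ (-p) := by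
  have hcancel : a ^ (-(p + 1)) * a ^ (p + 1) = 1 := by
    rw [← Real.rpow_add ha, neg_add_cancel, Real.rpow_zero]
  calc a ^ (-p) + p * M = a ^ (-p) + p * a ^ (-(p + 1)) * (M * a ^ (p + 1)) := by
        linear_combination (-p * M) * hcancel
    _ ≤ a ^ (-p) + p * a ^ (-(p + 1)) * (a - b) := by gcongr
    _ ≤ b ^ (-p) := rpow_neg_add_mul_sub_le_rpow_neg hp ha hb

theorem mul_natCast_le_rpow_neg_of_mul_rpow_le_sub (hp : 0 ≤ p) (hM : 0 ≤ M) (hl : ∀ n, 0 ≤ l n)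
    (h : ∀ n, M * l n ^ (p + 1) ≤ l n - l (n + 1)) {n : ℕ} (hn : 0 < l n) :
    p * M * n ≤ l n ^ (-p) := by
  induction n with
  | zero => simpa using (Real.rpow_pos_of_pos hn (-p)).le
  | succ n ih =>
    have hdecr : l (n + 1) ≤ l n :=
      sub_nonneg.1 ((mul_nonneg hM (Real.rpow_nonneg (hl n) _)).trans (h n))
    have hpos : 0 < l n := hn.trans_le hdecr
    calc p * M * (n + 1 : ℕ) = p * M * n + p * M := by push_cast; ring
      _ ≤ l n ^ (-p) + p * M := by gcongr; exact ih hpos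
      _ ≤ l (n + 1) ^ (-p) := rpow_neg_add_mul_le_rpow_neg_of_mul_rpow_le_sub hp hpos hn (h n)

theorem le_mul_natCast_rpow_neg_inv_of_mul_rpow_le_sub (hp : 0 < p) (hM : 0 < M) (hl : ∀ n, 0 ≤ l n)
    (h : ∀ n, M * l n ^ (p + 1) ≤ l n - l (n + 1)) {n : ℕ} (hn : 0 < n) :
    l n ≤ (p * M * n) ^ (-p⁻¹) := by
  rcases (hl n).eq_or_lt with hzero | hpos
  · rw [← hzero]
    positivity
  · rw [← inv_neg, Real.le_rpow_inv_iff_of_neg hpos (by positivity) (neg_lt_zero.2 hp)]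
    exact mul_natCast_le_rpow_neg_of_mul_rpow_le_sub hp.le hM.le hl h hpos

theorem exists_eventually_le_mul_rpow_neg_inv_of_mul_rpow_le_sub (hp : 0 < p) (hM : 0 < M)
    (hl : ∀ᶠ t in atTop, 0 ≤ l t) (h : ∀ᶠ t in atTop, M * l t ^ (p + 1) ≤ l t - l (t + 1)) :
    ∃ κ > (0 : ℝ), ∀ᶠ t in atTop, l t ≤ κ * (t : ℝ) ^ (-p⁻¹) := by
  obtain ⟨N, hN⟩ := eventually_atTop.1 (hl.and h)
  refine ⟨(p * M / 2) ^ (-p⁻¹), by positivity, ?_⟩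
  filter_upwards [eventually_ge_atTop (2 * N + 1)] with t ht
  obtain ⟨n, rfl⟩ : ∃ n, t = N + n := Nat.exists_eq_add_of_le (by lia)
  have htpos : (0 : ℝ) < (N + n : ℕ) := by exact_mod_cast (by lia : 0 < N + n)
  have hhalf : ((N + n : ℕ) : ℝ) ≤ 2 * n := by exact_mod_cast (by lia : N + n ≤ 2 * n)
  calc l (N + n) ≤ (p * M * n) ^ (-p⁻¹) :=
        le_mul_natCast_rpow_neg_inv_of_mul_rpow_le_sub (l := fun k ↦ l (N + k)) hp hM
          (fun k ↦ (hN (N + k) (by lia)).1) (fun k ↦ (hN (N + k) (by lia)).2) (by lia)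
    _ ≤ (p * M / 2 * (N + n : ℕ)) ^ (-p⁻¹) := by
        refine Real.rpow_le_rpow_of_nonpos (by positivity) ?_ (by simpa using hp.le)
        calc p * M / 2 * (N + n : ℕ) ≤ p * M / 2 * (2 * n) := by gcongr
          _ = p * M * n := by ring
    _ = (p * M / 2) ^ (-p⁻¹) * ((N + n : ℕ) : ℝ) ^ (-p⁻¹) :=
        Real.mul_rpow (by positivity) htpos.le

end PowerDecrease

theorem stmt16_general {θ M : ℝ} (hθ : 1 / 2 < θ) (hM : 0 < M) {l : ℕ → ℝ}
    (hl : ∀ᶠ t in atTop, 0 ≤ l t)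
    (h : ∀ᶠ t in atTop, M * l t ^ (2 * θ) ≤ l t - l (t + 1)) :
    ∃ κ > (0 : ℝ), ∀ᶠ t in atTop, l t ≤ κ * (t : ℝ) ^ (-(1 / (2 * θ - 1))) := by
  rw [one_div]
  exact exists_eventually_le_mul_rpow_neg_inv_of_mul_rpow_le_sub (by linarith) hM hl
    (by simpa using h)

theorem stmt16 (θ M : ℝ) (hθ : θ ∈ Set.Ioo (1 / 2 : ℝ) 1) (hM : 0 < M)
    (l : ℕ → ℝ) (hpos : ∀ t, 0 < l t) (hmono : Antitone l)
    (h : ∀ᶠ t in atTop, M * l t ^ (2 * θ) ≤ l t - l (t + 1)) :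
    ∃ κ > (0 : ℝ), ∀ᶠ t in atTop, l t ≤ κ * (t : ℝ) ^ (-(1 / (2 * θ - 1))) :=
  stmt16_general hθ.1 hM (.of_forall fun t ↦ (hpos t).le) h
end

section
/- In ℝ², let C = {(x₁, x₂) : x₂ = 0} and D = {(0,0), (7+η, η), (7, −η)} with η ∈ (0,1], let 0 < γ < √(3/2) − 1, and let (yᵗ, zᵗ, xᵗ) be generated by the DR splitting method for the feasibility problem with initial point x⁰ = (7, η). Define a_1 = 2 − 1/(1+γ) and a_{t+1} = (γ/(1+γ))·a_t + 1. Then the iterates are uniquely determined and satisfy for all t ≥ 1: yᵗ⁺¹ = (7+η, (a_t/(1+γ))·η), zᵗ⁺¹ = (7+η, η) and xᵗ⁺¹ = (7+η, a_{t+1}·η); consequently yᵗ → (7+η, η), zᵗ → (7+η, η) and xᵗ → (7+η, (1+γ)·η) as t → ∞. -/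
open Filter Topology

/-!
Reflecting `(p, b * η)` in the Douglas-Rachford step gives `(p, s * η)` with
`s = (1 - γ) / (1 + γ) * b`. If `p ≥ c`, then `(c + η, η)` is closer to it than `(c, -η)` as soon as
`s > 1 / 4`, and closer than the origin as soon as `2 * (1 - s) * η ^ 2 < c ^ 2`; for `p = c` these
conditions are sharp. For `b = 1` they read `γ < 3 / 5` and `4 * γ * η ^ 2 < (1 + γ) * c ^ 2`, and
they become weaker as `b` grows. So as long as `b ≥ 1` the step selects `(c + η, η)`, and only the
height keeps changing, by `b ↦ γ / (1 + γ) * b + 1`. The orbit of `1` under this affine contraction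
is `1 + γ - γ * (γ / (1 + γ)) ^ t`, which stays at least `1` and tends to the fixed point `1 + γ`.
-/

/-- `z` is a metric projection of `u` onto `D`; it need not be unique, since `D` need not be
convex. -/
def IsNearestPoint {E : Type*} [Norm E] [Sub E] (D : Set E) (u z : E) : Prop :=
  z ∈ D ∧ ∀ w ∈ D, ‖u - z‖ ≤ ‖u - w‖

theorem IsNearestPoint.eq_of_forall_lt {E : Type*} [Norm E] [Sub E] {D : Set E} {u v z : E}
    (hz : IsNearestPoint D u z) (hv : v ∈ D) (hlt : ∀ w ∈ D, w ≠ v → ‖u - v‖ < ‖u - w‖) : z = v :=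
  by_contra fun hne => (hlt z hz.1 hne).not_ge (hz.2 v hv)

/-- `(y, z, x)` is generated by the Douglas-Rachford splitting method with parameter `γ` for
finding a point of `C ∩ D`, where `P` is the projection onto the convex set `C`. The values `y 0`
and `z 0` are unconstrained. -/
structure IsDouglasRachford_s18 {E : Type*} [NormedAddCommGroup E] [NormedSpace ℝ E]
    (γ : ℝ) (P : E → E) (D : Set E) (x y z : ℕ → E) : Prop where
  y_succ : ∀ t, y (t + 1) = (1 / (1 + γ)) • (x t + γ • P (x t))
  z_succ : ∀ t, IsNearestPoint D ((2 : ℝ) • y (t + 1) - x t) (z (t + 1))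
  x_succ : ∀ t, x (t + 1) = x t + (z (t + 1) - y (t + 1))

section Plane

/-- The metric projection of the plane onto the horizontal axis. -/
def axisProj (w : EuclideanSpace ℝ (Fin 2)) : EuclideanSpace ℝ (Fin 2) :=
  !₂[w 0, 0]

/-- The nonconvex set `D` of the feasibility problem, with `c` in place of `7`. Only `(0, 0)` lies
on the horizontal axis when `η ≠ 0`. -/
def threePoints (c η : ℝ) : Set (EuclideanSpace ℝ (Fin 2)) :=
  {!₂[0, 0], !₂[c + η, η], !₂[c, -η]}

theorem norm_sub_lt_norm_sub_iff_sq_add_sq (p q b c d e : ℝ) :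
    ‖!₂[p, q] - !₂[b, c]‖ < ‖!₂[p, q] - !₂[d, e]‖ ↔
      (p - b) ^ 2 + (q - c) ^ 2 < (p - d) ^ 2 + (q - e) ^ 2 := by
  rw [← sq_lt_sq₀ (norm_nonneg _) (norm_nonneg _)]
  simp [EuclideanSpace.norm_sq_eq, Fin.sum_univ_two]

theorem tendsto_vec_two_const_left {α : Type*} {l : Filter α} {f : α → ℝ} {q : ℝ} (p : ℝ)
    (hf : Tendsto f l (𝓝 q)) : Tendsto (fun i => !₂[p, f i]) l (𝓝 !₂[p, q]) := by
  have hcont : Continuous fun r : ℝ => !₂[p, r] := by fun_prop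
  exact (hcont.tendsto q).comp hf

theorem IsNearestPoint.eq_of_threePoints {c η p s : ℝ} {z : EuclideanSpace ℝ (Fin 2)}
    (hz : IsNearestPoint (threePoints c η) !₂[p, s * η] z) (hc : 0 < c) (hη : 0 < η) (hp : c ≤ p)
    (hs : 1 / 4 < s) (hcs : 2 * (1 - s) * η ^ 2 < c ^ 2) : z = !₂[c + η, η] := by
  refine hz.eq_of_forall_lt (by simp [threePoints]) ?_
  rintro w (rfl | rfl | rfl) hne
  · rw [norm_sub_lt_norm_sub_iff_sq_add_sq]
    have : 0 ≤ (c + η) * (p - c) := mul_nonneg (by positivity) (sub_nonneg.2 hp)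
    linarith
  · exact absurd rfl hne
  · rw [norm_sub_lt_norm_sub_iff_sq_add_sq]
    have hslope : 0 ≤ η * (p - c) := mul_nonneg hη.le (sub_nonneg.2 hp)
    have hheight : 0 < (4 * s - 1) * η ^ 2 := mul_pos (by linarith) (by positivity)
    linarith

end Plane

section Height

/-- The orbit of `1` under `b ↦ γ / (1 + γ) * b + 1`, in closed form: the iterate `x t` has second
coordinate `drHeight γ t * η`. -/
noncomputable def drHeight (γ : ℝ) (t : ℕ) : ℝ :=
  1 + γ - γ * (γ / (1 + γ)) ^ t

theorem drHeight_zero (γ : ℝ) : drHeight γ 0 = 1 := by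
  simp [drHeight]

variable {γ : ℝ}

theorem drHeight_succ (hγ : 1 + γ ≠ 0) (t : ℕ) :
    drHeight γ (t + 1) = γ / (1 + γ) * drHeight γ t + 1 := by
  simp only [drHeight, pow_succ]
  field_simp
  ring

theorem one_le_drHeight (hγ : 0 ≤ γ) (t : ℕ) : 1 ≤ drHeight γ t := by
  have hratio : γ / (1 + γ) ≤ 1 := div_le_one_of_le₀ (by linarith) (by linarith)
  have hpow : (γ / (1 + γ)) ^ t ≤ 1 := pow_le_one₀ (by positivity) hratio
  have := mul_le_of_le_one_right hγ hpow
  unfold drHeight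
  linarith

theorem tendsto_drHeight (hγ : 0 ≤ γ) : Tendsto (drHeight γ) atTop (𝓝 (1 + γ)) := by
  have hratio : γ / (1 + γ) < 1 := (div_lt_one (by linarith)).2 (by linarith)
  have hpow := tendsto_pow_atTop_nhds_zero_of_lt_one (by positivity) hratio
  have hlim := (hpow.const_mul γ).const_sub (1 + γ)
  rwa [mul_zero, sub_zero] at hlim

theorem eq_drHeight_of_recurrence (hγ : 1 + γ ≠ 0) {a : ℕ → ℝ} (ha1 : a 1 = 2 - 1 / (1 + γ))
    (harec : ∀ t, 1 ≤ t → a (t + 1) = γ / (1 + γ) * a t + 1) :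
    ∀ t, 1 ≤ t → a t = drHeight γ t := by
  refine Nat.le_induction ?_ fun t ht ih => ?_
  · rw [ha1, drHeight_succ hγ, drHeight_zero]
    field_simp
    ring
  · rw [harec t ht, drHeight_succ hγ, ih]

end Height

namespace IsDouglasRachford_s18

variable {γ : ℝ} {D : Set (EuclideanSpace ℝ (Fin 2))} {x y z : ℕ → EuclideanSpace ℝ (Fin 2)}

theorem y_succ_of_axisProj (h : IsDouglasRachford_s18 γ axisProj D x y z) (hγ : 1 + γ ≠ 0)
    {t : ℕ} {p q : ℝ} (hxt : x t = !₂[p, q]) : y (t + 1) = !₂[p, q / (1 + γ)] := by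
  rw [h.y_succ, hxt]
  refine PiLp.ext (Fin.forall_fin_two.2 ⟨?_, ?_⟩)
  · change 1 / (1 + γ) * (p + γ * p) = p
    field_simp
  · change 1 / (1 + γ) * (q + γ * 0) = q / (1 + γ)
    ring

theorem isNearestPoint_of_axisProj (h : IsDouglasRachford_s18 γ axisProj D x y z) (hγ : 1 + γ ≠ 0)
    {t : ℕ} {p q : ℝ} (hxt : x t = !₂[p, q]) :
    IsNearestPoint D !₂[p, (1 - γ) / (1 + γ) * q] (z (t + 1)) := by
  have hreflect : (2 : ℝ) • y (t + 1) - x t = !₂[p, (1 - γ) / (1 + γ) * q] := by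
    rw [h.y_succ_of_axisProj hγ hxt, hxt]
    refine PiLp.ext (Fin.forall_fin_two.2 ⟨?_, ?_⟩)
    · change 2 * p - p = p
      ring
    · change 2 * (q / (1 + γ)) - q = (1 - γ) / (1 + γ) * q
      field_simp
      ring
  exact hreflect ▸ h.z_succ t

theorem x_succ_of_axisProj (h : IsDouglasRachford_s18 γ axisProj D x y z) (hγ : 1 + γ ≠ 0)
    {t : ℕ} {p q v w : ℝ} (hxt : x t = !₂[p, q]) (hzt : z (t + 1) = !₂[v, w]) :
    x (t + 1) = !₂[v, γ / (1 + γ) * q + w] := by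
  rw [h.x_succ, h.y_succ_of_axisProj hγ hxt, hxt, hzt]
  refine PiLp.ext (Fin.forall_fin_two.2 ⟨?_, ?_⟩)
  · change p + (v - p) = v
    ring
  · change q + (w - q / (1 + γ)) = γ / (1 + γ) * q + w
    field_simp
    ring

section ThreePoints

variable {c η : ℝ}

theorem z_succ_eq_of_threePoints (h : IsDouglasRachford_s18 γ axisProj (threePoints c η) x y z)
    (hc : 0 < c) (hη : 0 < η) (hγ : 0 < γ) (hγ' : γ < 3 / 5)
    (hcη : 4 * γ * η ^ 2 < (1 + γ) * c ^ 2) {t : ℕ} {p b : ℝ} (hp : c ≤ p) (hb : 1 ≤ b)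
    (hxt : x t = !₂[p, b * η]) : z (t + 1) = !₂[c + η, η] := by
  have hγ₁ : 0 < 1 + γ := by linarith
  set r := (1 - γ) / (1 + γ) with hr
  have hr_gt : 1 / 4 < r := by
    rw [hr, div_lt_div_iff₀ four_pos hγ₁]
    linarith
  have hr_le : r ≤ r * b := le_mul_of_one_le_right (by linarith) hb
  have hr_sq : 2 * (1 - r) * η ^ 2 < c ^ 2 := by
    have : 2 * (1 - r) * η ^ 2 = 4 * γ * η ^ 2 / (1 + γ) := by
      rw [hr]
      field_simp
      ring
    rwa [this, div_lt_iff₀' hγ₁]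
  have hz := h.isNearestPoint_of_axisProj hγ₁.ne' hxt
  rw [← hr, ← mul_assoc] at hz
  refine hz.eq_of_threePoints hc hη hp (hr_gt.trans_le hr_le) (lt_of_le_of_lt ?_ hr_sq)
  gcongr

theorem x_succ_eq_of_threePoints (h : IsDouglasRachford_s18 γ axisProj (threePoints c η) x y z)
    (hc : 0 < c) (hη : 0 < η) (hγ : 0 < γ) (hγ' : γ < 3 / 5)
    (hcη : 4 * γ * η ^ 2 < (1 + γ) * c ^ 2) {t : ℕ} {p b : ℝ} (hp : c ≤ p) (hb : 1 ≤ b)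
    (hxt : x t = !₂[p, b * η]) : x (t + 1) = !₂[c + η, (γ / (1 + γ) * b + 1) * η] := by
  have hzt := h.z_succ_eq_of_threePoints hc hη hγ hγ' hcη hp hb hxt
  rw [h.x_succ_of_axisProj (by positivity) hxt hzt, add_one_mul, mul_assoc]

theorem x_succ_eq_drHeight (h : IsDouglasRachford_s18 γ axisProj (threePoints c η) x y z)
    (hx0 : x 0 = !₂[c, η]) (hc : 0 < c) (hη : 0 < η) (hγ : 0 < γ) (hγ' : γ < 3 / 5)
    (hcη : 4 * γ * η ^ 2 < (1 + γ) * c ^ 2) (t : ℕ) :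
    x (t + 1) = !₂[c + η, drHeight γ (t + 1) * η] := by
  have hstep {t : ℕ} {p : ℝ} (hp : c ≤ p) (hxt : x t = !₂[p, drHeight γ t * η]) :
      x (t + 1) = !₂[c + η, drHeight γ (t + 1) * η] := by
    rw [drHeight_succ (by positivity)]
    exact h.x_succ_eq_of_threePoints hc hη hγ hγ' hcη hp (one_le_drHeight hγ.le t) hxt
  induction t with
  | zero => exact hstep le_rfl (by rw [hx0, drHeight_zero, one_mul])
  | succ t ih => exact hstep (by linarith) ih

theorem z_add_two_eq (h : IsDouglasRachford_s18 γ axisProj (threePoints c η) x y z)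
    (hx0 : x 0 = !₂[c, η]) (hc : 0 < c) (hη : 0 < η) (hγ : 0 < γ) (hγ' : γ < 3 / 5)
    (hcη : 4 * γ * η ^ 2 < (1 + γ) * c ^ 2) (t : ℕ) : z (t + 2) = !₂[c + η, η] :=
  h.z_succ_eq_of_threePoints hc hη hγ hγ' hcη (by linarith) (one_le_drHeight hγ.le _)
    (h.x_succ_eq_drHeight hx0 hc hη hγ hγ' hcη t)

theorem y_add_two_eq_drHeight (h : IsDouglasRachford_s18 γ axisProj (threePoints c η) x y z)
    (hx0 : x 0 = !₂[c, η]) (hc : 0 < c) (hη : 0 < η) (hγ : 0 < γ) (hγ' : γ < 3 / 5)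
    (hcη : 4 * γ * η ^ 2 < (1 + γ) * c ^ 2) (t : ℕ) :
    y (t + 2) = !₂[c + η, drHeight γ (t + 1) / (1 + γ) * η] := by
  rw [h.y_succ_of_axisProj (by positivity) (h.x_succ_eq_drHeight hx0 hc hη hγ hγ' hcη t),
    div_mul_eq_mul_div]

end ThreePoints

end IsDouglasRachford_s18

theorem stmt18_general {c η γ : ℝ} (hc : 0 < c) (hη : 0 < η) (hγ : 0 < γ) (hγ' : γ < 3 / 5)
    (hcη : 4 * γ * η ^ 2 < (1 + γ) * c ^ 2) {x y z : ℕ → EuclideanSpace ℝ (Fin 2)}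
    (h : IsDouglasRachford_s18 γ axisProj (threePoints c η) x y z) (hx0 : x 0 = !₂[c, η])
    {a : ℕ → ℝ} (ha1 : a 1 = 2 - 1 / (1 + γ))
    (harec : ∀ t, 1 ≤ t → a (t + 1) = γ / (1 + γ) * a t + 1) :
    (∀ t, 1 ≤ t →
      y (t + 1) = !₂[c + η, a t / (1 + γ) * η] ∧
      z (t + 1) = !₂[c + η, η] ∧
      x (t + 1) = !₂[c + η, a (t + 1) * η]) ∧
    Tendsto y atTop (𝓝 !₂[c + η, η]) ∧
    Tendsto z atTop (𝓝 !₂[c + η, η]) ∧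
    Tendsto x atTop (𝓝 !₂[c + η, (1 + γ) * η]) := by
  have hγ₁ : 1 + γ ≠ 0 := by positivity
  have ha := eq_drHeight_of_recurrence hγ₁ ha1 harec
  have hx := h.x_succ_eq_drHeight hx0 hc hη hγ hγ' hcη
  have hy := h.y_add_two_eq_drHeight hx0 hc hη hγ hγ' hcη
  have hz := h.z_add_two_eq hx0 hc hη hγ hγ' hcη
  have hlim := (tendsto_add_atTop_iff_nat 1).2 (tendsto_drHeight hγ.le)
  refine ⟨fun t ht => ?_, (tendsto_add_atTop_iff_nat 2).1 ?_, (tendsto_add_atTop_iff_nat 2).1 ?_,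
    (tendsto_add_atTop_iff_nat 1).1 ?_⟩
  · obtain ⟨t, rfl⟩ := Nat.exists_eq_add_of_le' ht
    rw [ha _ ht, ha _ (by lia)]
    exact ⟨hy t, hz t, hx (t + 1)⟩
  · simpa only [hy, div_self hγ₁, one_mul] using
      tendsto_vec_two_const_left (c + η) ((hlim.div_const (1 + γ)).mul_const η)
  · simpa only [hz] using tendsto_const_nhds
  · simpa only [hx] using tendsto_vec_two_const_left (c + η) (hlim.mul_const η)

theorem lt_three_fifths_of_lt_sqrt_sub_one {γ : ℝ} (hγ : γ < √(3 / 2) - 1) : γ < 3 / 5 := by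
  have hsqrt : √(3 / 2) < 8 / 5 := (Real.sqrt_lt' (by norm_num)).2 (by norm_num)
  linarith

theorem four_mul_mul_sq_lt_of_le_one {η γ : ℝ} (hη : 0 ≤ η) (hη' : η ≤ 1) (hγ : 0 ≤ γ) :
    4 * γ * η ^ 2 < (1 + γ) * 7 ^ 2 := by
  have := mul_le_of_le_one_right hγ (pow_le_one₀ hη hη' : η ^ 2 ≤ 1)
  linarith

theorem stmt18 (η : ℝ) (hη : η ∈ Set.Ioc (0 : ℝ) 1)
    (γ : ℝ) (hγ : 0 < γ) (hγ' : γ < Real.sqrt (3 / 2) - 1)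
    (C D : Set (EuclideanSpace ℝ (Fin 2)))
    (hC : C = {p : EuclideanSpace ℝ (Fin 2) | p 1 = 0})
    (hD : D = {(!₂[0, 0] : EuclideanSpace ℝ (Fin 2)),
               (!₂[7 + η, η] : EuclideanSpace ℝ (Fin 2)),
               (!₂[7, -η] : EuclideanSpace ℝ (Fin 2))})
    (pC : EuclideanSpace ℝ (Fin 2) → EuclideanSpace ℝ (Fin 2))
    (hpC : ∀ w, pC w = (!₂[w 0, 0] : EuclideanSpace ℝ (Fin 2)))
    (x y z : ℕ → EuclideanSpace ℝ (Fin 2))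
    (hx0 : x 0 = (!₂[7, η] : EuclideanSpace ℝ (Fin 2)))
    (hy : ∀ t, y (t + 1) = (1 / (1 + γ)) • (x t + γ • pC (x t)))
    (hz : ∀ t, z (t + 1) ∈ D ∧
      ∀ w ∈ D, ‖(2 : ℝ) • y (t + 1) - x t - z (t + 1)‖ ≤ ‖(2 : ℝ) • y (t + 1) - x t - w‖)
    (hx : ∀ t, x (t + 1) = x t + (z (t + 1) - y (t + 1)))
    (a : ℕ → ℝ) (ha1 : a 1 = 2 - 1 / (1 + γ))
    (harec : ∀ t, 1 ≤ t → a (t + 1) = γ / (1 + γ) * a t + 1) :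
    (∀ t, 1 ≤ t →
      y (t + 1) = (!₂[7 + η, a t / (1 + γ) * η] : EuclideanSpace ℝ (Fin 2)) ∧
      z (t + 1) = (!₂[7 + η, η] : EuclideanSpace ℝ (Fin 2)) ∧
      x (t + 1) = (!₂[7 + η, a (t + 1) * η] : EuclideanSpace ℝ (Fin 2))) ∧
    Tendsto y atTop (nhds (!₂[7 + η, η] : EuclideanSpace ℝ (Fin 2))) ∧
    Tendsto z atTop (nhds (!₂[7 + η, η] : EuclideanSpace ℝ (Fin 2))) ∧
    Tendsto x atTop (nhds (!₂[7 + η, (1 + γ) * η] : EuclideanSpace ℝ (Fin 2))) := by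
  subst hD
  obtain rfl : pC = axisProj := funext hpC
  exact stmt18_general (by norm_num) hη.1 hγ (lt_three_fifths_of_lt_sqrt_sub_one hγ')
    (four_mul_mul_sq_lt_of_le_one hη.1.le hη.2 hγ.le) ⟨hy, hz, hx⟩ hx0 ha1 harec
end
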